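/- arXiv:1702.07172 — 4 statements merged into one kernel-verified Lean document; each statement's English description precedes it below -/
import Mathlib

section
/- There exists a constant α > 0 such that for every integer d ≥ 1, every natural number n with n ≥ 12d², and every randomized online coloring algorithm (ι, μ, (A i)) on n-vertex graphs, there exists a d-inductive simple graph G on Fin n such that the expected number of colors used on G, namely ∑' i, (μ i)·(number of colors used by A i on G), is at least α·d·log n, where log is the base-2 logarithm. -/
/-!
The adversary builds the graph recursively, knowing the distribution `μ`. Let `m = ⌊(d + 1) / 2⌋`.
A stage-`j` block occupies `m (2 ^ j - 1)` consecutive vertices and carries a set `R` of *active*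
vertices, each with fewer than `m` later neighbours, whose colours number at least `j m / 2` in
expectation. A stage-`(j + 1)` block consists of two consecutive stage-`j` blocks, with active sets
`R₁` and `R₂`, followed by `m` fresh vertices `V`, in one of two ways:

* the vertices of `V` stay isolated, and the active set is `R₁ ∪ R₂`;
* `V` becomes a clique joined completely to `R₁`, and the active set is `R₂ ∪ V`.

If `S₁`, `S₂` are the colour sets of `R₁`, `R₂`, and `C` that of `V` in the second case, then
`|C| = m` and `C ∩ S₁ = ∅`, so `|S₁ ∪ S₂| + |S₂ ∪ C| ≥ |S₁| + |S₂| + m` (`card_union_gain`). This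
holds for every algorithm in the support of `μ`, hence in expectation, and one of the two choices
gains `m / 2` (`exists_block`). No random choice by the adversary is needed.

A vertex has fewer than `m` later neighbours while it is active; once it is joined to a set `V` it
has at most `(m - 1) + m ≤ d` of them and is never used again. So the arrival order itself witnesses
`d`-inductivity. As `n ≥ 12 d ^ 2`, there is room for `j ≥ (log n) / 2` stages.
-/

/-- The number of colors used by an online algorithm `A` on the graph `G`. -/
def colorsUsed {n : ℕ} (A : Fin n → SimpleGraph (Fin n) → ℕ)
    (G : SimpleGraph (Fin n)) : ℕ :=
  (Finset.univ.image fun v => A v G).card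

/-- `A` is a deterministic online coloring algorithm on `n`-vertex graphs:
its decision at time `t` depends only on the graph induced on the vertices `≤ t`,
and the produced coloring is always proper. -/
def IsOnlineAlg {n : ℕ} (A : Fin n → SimpleGraph (Fin n) → ℕ) : Prop :=
  (∀ (t : Fin n) (G G' : SimpleGraph (Fin n)),
      (∀ u v : Fin n, u ≤ t → v ≤ t → (G.Adj u v ↔ G'.Adj u v)) → A t G = A t G') ∧
  ∀ (G : SimpleGraph (Fin n)) (u v : Fin n), G.Adj u v → A u G ≠ A v G

/-- A closed walk has a chord: an edge of the graph joining two vertices of the walk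
that are not consecutive on it (i.e. the edge is not an edge of the walk). -/
def SimpleGraph.Walk.HasChord {V : Type*} {G : SimpleGraph V} {v : V}
    (p : G.Walk v v) : Prop :=
  ∃ x y, x ∈ p.support ∧ y ∈ p.support ∧ G.Adj x y ∧ s(x, y) ∉ p.edges

/-- A graph is chordal if every cycle of length at least 4 has a chord. -/
def SimpleGraph.IsChordal {V : Type*} (G : SimpleGraph V) : Prop :=
  ∀ ⦃v : V⦄ (p : G.Walk v v), p.IsCycle → 4 ≤ p.length → p.HasChord


/-- A graph on `Fin n` is `d`-inductive (`d`-degenerate) if there is an ordering of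
the vertices (given by a permutation `e`) in which every vertex has at most `d`
neighbors that come later in the order. -/
def IsInductive {n : ℕ} (G : SimpleGraph (Fin n)) (d : ℕ) : Prop :=
  ∃ e : Fin n ≃ Fin n, ∀ v : Fin n,
    {w : Fin n | G.Adj v w ∧ e v < e w}.ncard ≤ d

/-! ### Blocks of arrivals and joins -/

/-- The vertices adjacent to `v` that arrive after `v`. -/
def laterNbrs {n : ℕ} (G : SimpleGraph (Fin n)) (v : Fin n) : Set (Fin n) :=
  {w | G.Adj v w ∧ v < w}

/-- The vertices arriving at times in `[a, b)`. -/
def timeBlock {n : ℕ} (a b : ℕ) : Finset (Fin n) :=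
  Finset.univ.filter fun v => a ≤ v.1 ∧ v.1 < b

/-- The number of colours that `A` uses on the vertices of `R`. -/
def colorsOn {n : ℕ} (A : Fin n → SimpleGraph (Fin n) → ℕ) (G : SimpleGraph (Fin n))
    (R : Finset (Fin n)) : ℕ :=
  (R.image fun v => A v G).card

/-- `G` with `V` turned into a clique and joined completely to `R`. -/
def attach {n : ℕ} (G : SimpleGraph (Fin n)) (R V : Finset (Fin n)) : SimpleGraph (Fin n) where
  Adj u v := G.Adj u v ∨ (u ≠ v ∧ ((u ∈ V ∧ v ∈ V) ∨ (u ∈ R ∧ v ∈ V) ∨ (u ∈ V ∧ v ∈ R)))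
  symm := ⟨fun u v h => by
    rcases h with h | ⟨h, h'⟩
    · exact Or.inl h.symm
    · exact Or.inr ⟨h.symm, by tauto⟩⟩
  loopless := ⟨fun u h => by
    rcases h with h | ⟨h, -⟩
    · exact G.loopless.irrefl _ h
    · exact h rfl⟩

theorem card_timeBlock {n a m : ℕ} (h : a + m ≤ n) :
    (timeBlock a (a + m) : Finset (Fin n)).card = m := by
  have : (timeBlock a (a + m) : Finset (Fin n)).map Fin.valEmbedding = Finset.Ico a (a + m) := by
    ext x
    simp only [timeBlock, Finset.mem_map, Finset.mem_filter, Finset.mem_univ, true_and,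
      Fin.valEmbedding_apply, Finset.mem_Ico]
    constructor
    · rintro ⟨v, hv, rfl⟩
      exact hv
    · intro hx
      exact ⟨⟨x, by omega⟩, hx, rfl⟩
  rw [← Finset.card_map Fin.valEmbedding, this]
  simp

/-! ### Counting colours -/

/-- Whatever part of `C` is wasted on colours of `S₂` is gained in `S₁ ∪ S₂`, because these colours
lie outside `S₁`. -/
theorem card_union_gain (S₁ S₂ C : Finset ℕ) (h : Disjoint C S₁) :
    S₁.card + S₂.card + C.card ≤ (S₁ ∪ S₂).card + (S₂ ∪ C).card := by
  have h1 : (S₁ ∪ S₂ ∪ C).card ≤ (S₁ ∪ S₂).card + (S₂ ∪ C).card - S₂.card := by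
    have e1 := Finset.card_union_add_card_inter (S₁ ∪ S₂) (S₂ ∪ C)
    have e2 : S₂.card ≤ ((S₁ ∪ S₂) ∩ (S₂ ∪ C)).card :=
      Finset.card_le_card fun x hx => by simp [hx]
    have e3 : (S₁ ∪ S₂ ∪ C).card ≤ ((S₁ ∪ S₂) ∪ (S₂ ∪ C)).card :=
      Finset.card_le_card fun x hx => by
        simp only [Finset.mem_union] at hx ⊢
        tauto
    omega
  have h2 : S₁.card + C.card ≤ (S₁ ∪ S₂ ∪ C).card := by
    rw [← Finset.card_union_of_disjoint h.symm]
    exact Finset.card_le_card fun x hx => by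
      simp only [Finset.mem_union] at hx ⊢
      tauto
  have h3 : S₂.card ≤ (S₁ ∪ S₂).card := Finset.card_le_card Finset.subset_union_right
  omega

theorem colorsOn_le {n : ℕ} (A : Fin n → SimpleGraph (Fin n) → ℕ) (G : SimpleGraph (Fin n))
    (R : Finset (Fin n)) : colorsOn A G R ≤ n :=
  Finset.card_image_le.trans ((Finset.card_le_univ R).trans (by simp))

theorem image_congr_online {n : ℕ} {A : Fin n → SimpleGraph (Fin n) → ℕ} (hA : IsOnlineAlg A)
    {G G' : SimpleGraph (Fin n)} {b : ℕ} {R : Finset (Fin n)}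
    (hG : ∀ u v : Fin n, u.1 < b → v.1 < b → (G'.Adj u v ↔ G.Adj u v)) (hR : ∀ v ∈ R, v.1 < b) :
    (R.image fun v => A v G') = R.image fun v => A v G := by
  refine Finset.image_congr fun v hv => hA.1 v _ _ fun x y hx hy => ?_
  have := hR v hv
  exact hG x y (lt_of_le_of_lt hx this) (lt_of_le_of_lt hy this)

/-! ### Expectations over the algorithm -/

theorem summable_weighted {ι : Type} (μ : PMF ι) {n : ℕ} (f : ι → ℕ) (hf : ∀ i, f i ≤ n) :
    Summable fun i => (μ i).toReal * (f i : ℝ) := by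
  have hs : Summable fun i => (μ i).toReal := ENNReal.summable_toReal μ.tsum_coe_ne_top
  refine Summable.of_nonneg_of_le (fun i => by positivity) (fun i => ?_) (hs.mul_right (n : ℝ))
  have : (f i : ℝ) ≤ n := by exact_mod_cast hf i
  gcongr

theorem expectation_gain {ι : Type} (μ : PMF ι) {n m : ℕ} (f g p q : ι → ℕ)
    (hf : ∀ i, f i ≤ n) (hg : ∀ i, g i ≤ n) (hp : ∀ i, p i ≤ n) (hq : ∀ i, q i ≤ n)
    (h : ∀ i, f i + g i + m ≤ p i + q i) :
    (∑' i, (μ i).toReal * (f i : ℝ)) + (∑' i, (μ i).toReal * (g i : ℝ)) + m ≤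
      (∑' i, (μ i).toReal * (p i : ℝ)) + ∑' i, (μ i).toReal * (q i : ℝ) := by
  have hs : Summable fun i => (μ i).toReal := ENNReal.summable_toReal μ.tsum_coe_ne_top
  have h1 : ∑' i, (μ i).toReal = 1 := by
    rw [← ENNReal.tsum_toReal_eq (fun i => μ.apply_ne_top i), μ.tsum_coe]
    rfl
  have hm : (m : ℝ) = ∑' i, (μ i).toReal * (m : ℝ) := by rw [tsum_mul_right, h1, one_mul]
  have sf := summable_weighted μ f hf
  have sg := summable_weighted μ g hg
  have sp := summable_weighted μ p hp
  have sq := summable_weighted μ q hq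
  rw [hm, ← sf.tsum_add sg, ← (sf.add sg).tsum_add (hs.mul_right _), ← sp.tsum_add sq]
  refine ((sf.add sg).add (hs.mul_right _)).tsum_le_tsum (fun i => ?_) (sp.add sq)
  have : (f i : ℝ) + g i + m ≤ p i + q i := by exact_mod_cast h i
  rw [← mul_add, ← mul_add, ← mul_add]
  gcongr

/-! ### The recursive construction -/

/-- Any graph living on the vertices before time `a` can be extended by a stage-`j` block on the
times in `[a, b)`, not joined to the past, whose active set `R` has at least `j m / 2` colours in
expectation. -/
theorem exists_block {n d m : ℕ} (hm : 1 ≤ m) (hmd : 2 * m ≤ d + 1) {ι : Type} (μ : PMF ι)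
    (A : ι → Fin n → SimpleGraph (Fin n) → ℕ) (hA : ∀ i, IsOnlineAlg (A i)) (j : ℕ) :
    ∀ (a b : ℕ), b + m = a + m * 2 ^ j → b ≤ n → ∀ G : SimpleGraph (Fin n),
      (∀ u v, G.Adj u v → u.1 < a) → (∀ v, (laterNbrs G v).ncard ≤ d) →
      ∃ (G' : SimpleGraph (Fin n)) (R : Finset (Fin n)),
        (∀ u v, G'.Adj u v → u.1 < b) ∧ (∀ v, (laterNbrs G' v).ncard ≤ d) ∧
        (∀ u v : Fin n, u.1 < a → (G'.Adj u v ↔ G.Adj u v)) ∧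
        (∀ v ∈ R, a ≤ v.1 ∧ v.1 < b ∧ (laterNbrs G' v).ncard < m) ∧
        (j : ℝ) * m / 2 ≤ ∑' i, (μ i).toReal * (colorsOn (A i) G' R : ℝ) := by
  induction j with
  | zero =>
    intro a b hab hbn G hG hd
    have : b = a := by simpa using hab
    subst this
    exact ⟨G, ∅, hG, hd, fun _ _ _ => Iff.rfl, by simp, by simp [colorsOn]⟩
  | succ j ih =>
    intro a b hab hbn G hG hd
    have hpow : m ≤ m * 2 ^ j := Nat.le_mul_of_pos_right _ (by positivity)
    have hpow2 : m * 2 ^ (j + 1) = 2 * (m * 2 ^ j) := by ring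
    obtain ⟨b₁, hb₁⟩ : ∃ b₁, b₁ + m = a + m * 2 ^ j := ⟨a + m * 2 ^ j - m, by omega⟩
    obtain ⟨b₂, hb₂⟩ : ∃ b₂, b₂ + m = b₁ + m * 2 ^ j := ⟨b₁ + m * 2 ^ j - m, by omega⟩
    have hb : b = b₂ + m := by omega
    obtain ⟨G₁, R₁, hG₁, hd₁, hext₁, hR₁, hE₁⟩ := ih a b₁ hb₁ (by omega) G hG hd
    obtain ⟨G₂, R₂, hG₂, hd₂, hext₂, hR₂, hE₂⟩ := ih b₁ b₂ hb₂ (by omega) G₁ hG₁ hd₁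
    have hR₁d : ∀ v ∈ R₁, (laterNbrs G₂ v).ncard < m := by
      intro v hv
      have : laterNbrs G₂ v = laterNbrs G₁ v := by
        ext w
        simp only [laterNbrs, Set.mem_ofPred_eq, hext₂ v w (hR₁ v hv).2.1]
      rw [this]
      exact (hR₁ v hv).2.2
    set V : Finset (Fin n) := timeBlock b₂ b with hV
    have hVmem : ∀ v, v ∈ V ↔ b₂ ≤ v.1 ∧ v.1 < b := by simp [hV, timeBlock]
    have hVcard : V.card = m := by
      rw [hV, hb]
      exact card_timeBlock (by omega)
    set G₃ := attach G₂ R₁ V with hG₃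
    have hadj : ∀ u v, G₃.Adj u v ↔ G₂.Adj u v ∨
        (u ≠ v ∧ ((u ∈ V ∧ v ∈ V) ∨ (u ∈ R₁ ∧ v ∈ V) ∨ (u ∈ V ∧ v ∈ R₁))) :=
      fun _ _ => Iff.rfl
    -- The online property, applied across the three successive extensions of `G`.
    have himg₁ : ∀ i, (R₁.image fun v => A i v G₂) = R₁.image fun v => A i v G₁ := fun i =>
      image_congr_online (hA i) (fun u v hu _ => hext₂ u v hu) fun v hv => (hR₁ v hv).2.1
    have hold : ∀ u v : Fin n, u.1 < b₂ → v.1 < b₂ → (G₃.Adj u v ↔ G₂.Adj u v) := by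
      intro u v hu hv
      have hu' : u ∉ V := fun h => by have := (hVmem u).1 h; omega
      have hv' : v ∉ V := fun h => by have := (hVmem v).1 h; omega
      simp [hadj, hu', hv']
    have himg₁₃ : ∀ i, (R₁.image fun v => A i v G₃) = R₁.image fun v => A i v G₂ := fun i =>
      image_congr_online (hA i) hold fun v hv => by have := (hR₁ v hv).2.1; omega
    have himg₂ : ∀ i, (R₂.image fun v => A i v G₃) = R₂.image fun v => A i v G₂ := fun i =>
      image_congr_online (hA i) hold fun v hv => (hR₂ v hv).2.1
    have hgain : ∀ i, colorsOn (A i) G₁ R₁ + colorsOn (A i) G₂ R₂ + m ≤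
        colorsOn (A i) G₂ (R₁ ∪ R₂) + colorsOn (A i) G₃ (R₂ ∪ V) := by
      intro i
      have hC : (V.image fun v => A i v G₃).card = m := by
        rw [Finset.card_image_of_injOn, hVcard]
        intro u hu v hv huv
        by_contra hne
        exact (hA i).2 G₃ u v ((hadj u v).2 (Or.inr ⟨hne, Or.inl ⟨hu, hv⟩⟩)) huv
      have hdisj : Disjoint (V.image fun v => A i v G₃) (R₁.image fun v => A i v G₂) := by
        rw [← himg₁₃, Finset.disjoint_left]
        intro c hc hc'
        obtain ⟨u, hu, rfl⟩ := Finset.mem_image.1 hc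
        obtain ⟨v, hv, huv⟩ := Finset.mem_image.1 hc'
        have hne : v ≠ u := by
          rintro rfl
          have := (hVmem v).1 hu
          have := (hR₁ v hv).2.1
          omega
        exact (hA i).2 G₃ v u ((hadj v u).2 (Or.inr ⟨hne, Or.inr (Or.inl ⟨hv, hu⟩)⟩)) huv
      have := card_union_gain _ (R₂.image fun v => A i v G₂) _ hdisj
      simp only [colorsOn, Finset.image_union, himg₂, ← himg₁]
      omega
    have hE := expectation_gain μ _ _ _ _ (fun i => colorsOn_le (A i) G₁ R₁)
      (fun i => colorsOn_le (A i) G₂ R₂) (fun i => colorsOn_le (A i) G₂ (R₁ ∪ R₂))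
      (fun i => colorsOn_le (A i) G₃ (R₂ ∪ V)) hgain
    by_cases hcase : ((j + 1 : ℕ) : ℝ) * m / 2 ≤
        ∑' i, (μ i).toReal * (colorsOn (A i) G₂ (R₁ ∪ R₂) : ℝ)
    · refine ⟨G₂, R₁ ∪ R₂, fun u v h => ?_, hd₂, fun u v hu => ?_, fun v hv => ?_, hcase⟩
      · have := hG₂ u v h
        omega
      · rw [hext₂ u v (by omega), hext₁ u v hu]
      · rcases Finset.mem_union.1 hv with hv | hv
        · exact ⟨(hR₁ v hv).1, by have := (hR₁ v hv).2.1; omega, hR₁d v hv⟩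
        · exact ⟨by have := (hR₂ v hv).1; omega, by have := (hR₂ v hv).2.1; omega,
            (hR₂ v hv).2.2⟩
    · have hsame : ∀ u, u ∉ R₁ → u ∉ V → ∀ v, (G₃.Adj u v ↔ G₂.Adj u v) := by
        intro u hu hu' v
        simp [hadj, hu, hu']
      have hlater : ∀ u, u ∉ R₁ → u ∉ V → laterNbrs G₃ u = laterNbrs G₂ u := by
        intro u hu hu'
        ext w
        simp only [laterNbrs, Set.mem_ofPred_eq, hsame u hu hu']
      have hVd : ∀ u ∈ V, (laterNbrs G₃ u).ncard < m := by
        intro u hu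
        have hsub : laterNbrs G₃ u ⊆ ((V.erase u : Finset (Fin n)) : Set (Fin n)) := by
          rintro w ⟨hw, hlt⟩
          have hu2 := (hVmem u).1 hu
          have hlt' : u.1 < w.1 := hlt
          have hwV : w ∈ V := by
            rcases (hadj u w).1 hw with h | ⟨-, h | h | h⟩
            · have := hG₂ _ _ h
              omega
            · exact h.2
            · exact h.2
            · have := (hR₁ w h.2).2.1
              omega
          simp [hwV, hlt.ne']
        have := Set.ncard_le_ncard hsub (Finset.finite_toSet _)
        rw [Set.ncard_coe_finset, Finset.card_erase_of_mem hu, hVcard] at this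
        omega
      refine ⟨G₃, R₂ ∪ V, fun u v h => ?_, fun u => ?_, fun u v hu => ?_, fun v hv => ?_, ?_⟩
      · rcases (hadj u v).1 h with h | ⟨-, h | h | h⟩
        · have := hG₂ u v h
          omega
        · exact ((hVmem u).1 h.1).2
        · have := (hR₁ u h.1).2.1
          omega
        · exact ((hVmem u).1 h.1).2
      · by_cases huV : u ∈ V
        · have := hVd u huV
          omega
        by_cases huR : u ∈ R₁
        · have hsub : laterNbrs G₃ u ⊆ laterNbrs G₂ u ∪ (V : Set (Fin n)) := by
            rintro w ⟨hw, hlt⟩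
            rcases (hadj u w).1 hw with h | ⟨-, h | h | h⟩
            · exact Or.inl ⟨h, hlt⟩
            · exact Or.inr h.2
            · exact Or.inr h.2
            · exact absurd h.1 huV
          have h1 := Set.ncard_le_ncard hsub (Set.toFinite _)
          have h2 := Set.ncard_union_le (laterNbrs G₂ u) (V : Set (Fin n))
          rw [Set.ncard_coe_finset, hVcard] at h2
          have := hR₁d u huR
          omega
        · rw [hlater u huR huV]
          exact hd₂ u
      · have huR : u ∉ R₁ := fun h => by have := (hR₁ u h).1; omega
        have huV : u ∉ V := fun h => by have := (hVmem u).1 h; omega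
        rw [hsame u huR huV, hext₂ u v (by omega), hext₁ u v hu]
      · rcases Finset.mem_union.1 hv with hv | hv
        · have h2 := hR₂ v hv
          have hvR : v ∉ R₁ := fun h => by have := (hR₁ v h).2.1; omega
          have hvV : v ∉ V := fun h => by have := (hVmem v).1 h; omega
          rw [hlater v hvR hvV]
          exact ⟨by omega, by omega, h2.2.2⟩
        · have h2 := (hVmem v).1 hv
          exact ⟨by omega, h2.2, hVd v hv⟩
      · push_cast at hcase ⊢
        linarith

/-! ### The number of stages -/

theorem rand_lower_bound_inductive :
    ∃ α : ℝ, 0 < α ∧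
      ∀ (d : ℕ), 1 ≤ d →
        ∀ (n : ℕ), 12 * d ^ 2 ≤ n →
          ∀ (ι : Type) [Countable ι] (μ : PMF ι)
            (A : ι → Fin n → SimpleGraph (Fin n) → ℕ),
            (∀ i, IsOnlineAlg (A i)) →
            ∃ G : SimpleGraph (Fin n), IsInductive G d ∧
              α * d * Real.logb 2 n ≤ ∑' i, (μ i).toReal * (colorsUsed (A i) G : ℝ) := by
  refine ⟨1 / 8, by norm_num, fun d hd n hn ι _ μ A hA => ?_⟩
  obtain ⟨m, hm1, hm2, hm3⟩ : ∃ m, 1 ≤ m ∧ 2 * m ≤ d + 1 ∧ d ≤ 2 * m :=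
    ⟨(d + 1) / 2, by omega, by omega, by omega⟩
  have hdd : d ≤ d ^ 2 := Nat.le_self_pow (by norm_num) d
  have hnm : n / m ≠ 0 := (Nat.div_pos (by omega) (by omega)).ne'
  -- The largest `j` with `m * 2 ^ j ≤ n`.
  set j := Nat.log 2 (n / m) with hj
  have hle : m * 2 ^ j ≤ n :=
    (Nat.mul_le_mul_left m (Nat.pow_log_le_self 2 hnm)).trans (Nat.mul_div_le n m)
  have hlt : n < m * 2 ^ (j + 1) := by
    have := Nat.lt_pow_succ_log_self (b := 2) (by norm_num) (n / m)
    rw [Nat.div_lt_iff_lt_mul (by omega)] at this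
    rw [mul_comm]
    exact this
  -- `n ^ 2 < (d * 2 ^ (j + 1)) ^ 2 ≤ n * 4 ^ (j + 1) / 12`.
  have hn4 : n ≤ 4 ^ j := by
    have h1 : n < d * (2 * 2 ^ j) := by
      have : m * 2 ^ (j + 1) ≤ d * (2 * 2 ^ j) := by
        rw [pow_succ, mul_comm (2 ^ j)]
        exact Nat.mul_le_mul_right _ (by omega)
      omega
    have h2 : n * n ≤ (d * (2 * 2 ^ j)) * (d * (2 * 2 ^ j)) := Nat.mul_le_mul h1.le h1.le
    have h3 : (d * (2 * 2 ^ j)) * (d * (2 * 2 ^ j)) = 4 * d ^ 2 * 4 ^ j := by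
      rw [show (4 : ℕ) ^ j = 2 ^ j * 2 ^ j by rw [← mul_pow]; norm_num]
      ring
    have h4 : 4 * d ^ 2 * 4 ^ j ≤ n * 4 ^ j := Nat.mul_le_mul_right _ (by omega)
    exact Nat.le_of_mul_le_mul_left (h2.trans (h3.le.trans h4)) (by omega)
  have hlog : Real.logb 2 n ≤ 2 * j := by
    have hn0 : (0 : ℝ) < n := by
      have : 0 < n := by omega
      exact_mod_cast this
    rw [Real.logb_le_iff_le_rpow (by norm_num) hn0]
    have : (2 : ℝ) ^ (2 * (j : ℝ)) = (4 : ℝ) ^ j := by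
      rw [Real.rpow_mul (by norm_num), Real.rpow_natCast]
      norm_num
    rw [this]
    exact_mod_cast hn4
  have hpow : m ≤ m * 2 ^ j := Nat.le_mul_of_pos_right _ (by positivity)
  obtain ⟨G, R, -, hGd, -, -, hE⟩ := exists_block hm1 hm2 μ A hA j 0 (m * 2 ^ j - m)
    (by omega) (by omega) ⊥ (by simp) (by simp [laterNbrs])
  refine ⟨G, ⟨Equiv.refl _, hGd⟩, ?_⟩
  have hmono : ∑' i, (μ i).toReal * (colorsOn (A i) G R : ℝ) ≤
      ∑' i, (μ i).toReal * (colorsUsed (A i) G : ℝ) := by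
    refine (summable_weighted μ _ fun i => colorsOn_le (A i) G R).tsum_le_tsum (fun i => ?_)
      (summable_weighted μ _ fun i => colorsOn_le (A i) G Finset.univ)
    have : colorsOn (A i) G R ≤ colorsUsed (A i) G :=
      Finset.card_le_card (Finset.image_subset_image (Finset.subset_univ R))
    gcongr
  refine le_trans ?_ (hE.trans hmono)
  have hdm : (d : ℝ) ≤ 2 * m := by exact_mod_cast hm3
  have hd0 : (0 : ℝ) ≤ d := Nat.cast_nonneg d
  have hj0 : (0 : ℝ) ≤ j := Nat.cast_nonneg j
  calc 1 / 8 * (d : ℝ) * Real.logb 2 n ≤ 1 / 8 * d * (2 * j) := by gcongr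
    _ ≤ 1 / 8 * (2 * m) * (2 * j) := by gcongr
    _ = j * m / 2 := by ring
end

section
/- There exists a constant α > 0 such that for every integer d ≥ 2, every real number ε with 0 < ε ≤ 1, every natural number n with (n : ℝ) ≥ max(2·d², 2^(7/ε)), every natural number b with (b : ℝ) ≤ n^(1−ε), and every deterministic online coloring algorithm with a reordering buffer of size b on n-vertex graphs, there exists a chordal simple graph G on Fin n with chromatic number χ(G) = d such that the number of colors used by the algorithm on G is at least α·ε·d·log n, where log is the base-2 logarithm. -/
/-- `(τ, col)` is a deterministic online coloring algorithm with a reordering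
buffer of size `b`: `τ G v` is the time at which vertex `v` is colored and
`col G v` its color.  A vertex is colored no earlier than its arrival, at the
end of each step at most `b` arrived vertices are still uncolored, decisions
made by time `t` depend only on the graph induced on the vertices `≤ t`, and
the coloring is always proper. -/
def IsBufferAlg {n : ℕ} (b : ℕ) (τ : SimpleGraph (Fin n) → Fin n → Fin n)
    (col : SimpleGraph (Fin n) → Fin n → ℕ) : Prop :=
  (∀ (G : SimpleGraph (Fin n)) (v : Fin n), v ≤ τ G v) ∧
  (∀ (G : SimpleGraph (Fin n)) (t : Fin n),
      {v : Fin n | v ≤ t ∧ t < τ G v}.ncard ≤ b) ∧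
  (∀ (t : Fin n) (G G' : SimpleGraph (Fin n)),
      (∀ u v : Fin n, u ≤ t → v ≤ t → (G.Adj u v ↔ G'.Adj u v)) →
      ∀ v : Fin n, τ G v ≤ t → τ G v = τ G' v ∧ col G v = col G' v) ∧
  ∀ (G : SimpleGraph (Fin n)) (u v : Fin n), G.Adj u v → col G u ≠ col G v

/-- The number of colors used on `G` by a buffer algorithm with colors `col`. -/
def colorsUsedBuf {n : ℕ} (col : SimpleGraph (Fin n) → Fin n → ℕ)
    (G : SimpleGraph (Fin n)) : ℕ :=
  (Finset.univ.image (col G)).card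

/-! ### Elimination orders -/

/-- A graph is chordal if the neighbors of rank at least that of `v` form a clique, for each `v`.
Ties in the rank are allowed. A vertex of least rank on a long cycle has two cycle neighbors that
span a chord. -/
theorem isChordal_of_elim {V : Type*} (G : SimpleGraph V) (f : V → ℕ)
    (h : ∀ v u w, f v ≤ f u → f v ≤ f w → G.Adj v u → G.Adj v w → u ≠ w → G.Adj u w) :
    G.IsChordal := by
  classical
  intro v p hp hlen
  obtain ⟨x, hx, hmin⟩ := Finset.exists_min_image p.support.toFinset f
    ⟨v, by simp⟩
  simp only [List.mem_toFinset] at hx hmin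
  have hq := hp.rotate hx
  set q := p.rotate x hx with hqdef
  have hqlen : q.length = p.length := by simp [hqdef]
  have hedge : ∀ e, e ∈ q.edges ↔ e ∈ p.edges := fun e => (p.rotate_edges x hx).mem_iff
  have hsup : ∀ y, y ∈ q.support → y ∈ p.support := by
    intro y hy; simpa [hqdef] using hy
  have hnil : ¬ q.Nil := hq.not_nil
  have hne := hq.snd_ne_penultimate
  have a1 : G.Adj x q.snd := q.adj_snd hnil
  have a2 : G.Adj x q.penultimate := (q.adj_penultimate hnil).symm
  have m1 : q.snd ∈ p.support := hsup _ (q.getVert_mem_support _)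
  have m2 : q.penultimate ∈ p.support := hsup _ (q.getVert_mem_support _)
  refine ⟨q.snd, q.penultimate, m1, m2,
    h x _ _ (hmin _ m1) (hmin _ m2) a1 a2 hne, ?_⟩
  rw [← hedge, SimpleGraph.Walk.mk_mem_edges_iff_exists]
  rintro ⟨i, hi, he⟩
  have hinj := hq.getVert_injOn
  have hi0 : i ≠ 0 := by
    rintro rfl
    rw [SimpleGraph.Walk.getVert_zero, Sym2.eq_iff] at he
    rcases he with ⟨h1, -⟩ | ⟨h1, -⟩
    · exact a1.ne h1
    · exact a2.ne h1
  simp only [Sym2.eq_iff] at he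
  rcases he with ⟨h1, h2⟩ | ⟨h1, h2⟩
  · have e1 := hinj (by simp; omega) (by simp; omega) h1
    have e2 := hinj (by simp; omega) (by simp; omega) h2
    omega
  · have e1 := hinj (by simp; omega) (by simp; omega) h1
    have e2 := hinj (by simp; omega) (by simp; omega) h2
    omega

/-- Greedy coloring in order of decreasing rank: `d` colors suffice if each vertex has fewer than
`d` neighbors of rank at least its own. -/
theorem colorable_of_elim {V : Type*} [Fintype V] [DecidableEq V] (G : SimpleGraph V)
    [DecidableRel G.Adj] (f : V → ℕ) (d : ℕ)
    (h : ∀ v, (Finset.univ.filter fun u => f v ≤ f u ∧ G.Adj v u).card < d) :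
    G.Colorable d := by
  suffices H : ∀ s : Finset V, ∃ c : V → Fin d, ∀ u ∈ s, ∀ v ∈ s, G.Adj u v → c u ≠ c v by
    obtain ⟨c, hc⟩ := H Finset.univ
    exact ⟨SimpleGraph.Coloring.mk c fun {u v} huv =>
      hc u (Finset.mem_univ _) v (Finset.mem_univ _) huv⟩
  intro s
  induction s using Finset.induction_on_min_value f with
  | empty =>
    rcases isEmpty_or_nonempty V with hV | ⟨⟨v⟩⟩
    · exact ⟨fun v => hV.elim v, by simp⟩
    · exact ⟨fun _ => ⟨0, (Nat.zero_le _).trans_lt (h v)⟩, by simp⟩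
  | insert a s ha hmin ih =>
    obtain ⟨c, hc⟩ := ih
    obtain ⟨k, hk⟩ : ∃ k, k ∉ (Finset.univ.filter fun u => f a ≤ f u ∧ G.Adj a u).image c := by
      by_contra! hcon
      have h1 := Finset.card_image_le (s := Finset.univ.filter fun u => f a ≤ f u ∧ G.Adj a u)
        (f := c)
      rw [Finset.eq_univ_iff_forall.2 hcon, Finset.card_univ, Fintype.card_fin] at h1
      exact absurd (h a) (by omega)
    have hk' : ∀ u ∈ s, G.Adj a u → c u ≠ k := by
      intro u hu hau he
      exact hk (Finset.mem_image.2 ⟨u, by simp [hmin u hu, hau], he⟩)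
    refine ⟨Function.update c a k, ?_⟩
    intro u hu v hv huv
    rw [Finset.mem_insert] at hu hv
    rcases hu with rfl | hu <;> rcases hv with rfl | hv
    · exact absurd huv (G.irrefl)
    · have : v ≠ u := huv.ne'
      simp [Function.update_of_ne this, (hk' v hv huv).symm]
    · have : u ≠ v := huv.ne
      simp [Function.update_of_ne this, (hk' u hu huv.symm)]
    · have h1 : u ≠ a := fun e => ha (e ▸ hu)
      have h2 : v ≠ a := fun e => ha (e ▸ hv)
      simp [Function.update_of_ne h1, Function.update_of_ne h2, hc u hu v hv huv]

/-! ### Forests of cliques -/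

/-- The graph whose vertices are partitioned into cliques labelled by `cl`, where in addition a vertex
`u` with `par u = some c` is joined to every vertex of the clique `c`. -/
def cliqueForest {n : ℕ} (cl : Fin n → ℕ) (par : Fin n → Option ℕ) : SimpleGraph (Fin n) where
  Adj u v := u ≠ v ∧ (cl u = cl v ∨ par u = some (cl v) ∨ par v = some (cl u))
  symm := ⟨by
    rintro u v ⟨h, h1⟩
    exact ⟨h.symm, by tauto⟩⟩
  loopless := ⟨fun u h => h.1 rfl⟩

/-- The map `par` is induced by a forest structure on the clique labels: parents have larger labels,
and all vertices of a clique which are joined to a parent have the same parent. Some vertices of a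
non-root clique may have `par u = none`. -/
structure IsParent {n : ℕ} (cl : Fin n → ℕ) (par : Fin n → Option ℕ) : Prop where
  lt : ∀ u c, par u = some c → cl u < c
  unique : ∀ u v a b, cl u = cl v → par u = some a → par v = some b → a = b

/-- The elimination rank: by clique label, and inside a clique the vertices not joined to the parent
clique come first. -/
def elimRank {n : ℕ} (cl : Fin n → ℕ) (par : Fin n → Option ℕ) (v : Fin n) : ℕ :=
  2 * cl v + (par v).elim 0 fun _ => 1

/-- Neighbors of `v` that are not eliminated before `v` lie in the clique of `v` or in its parent. In
the first case they are joined to the parent clique if `v` is. -/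
theorem IsParent.later {n : ℕ} {cl : Fin n → ℕ} {par : Fin n → Option ℕ} (hP : IsParent cl par)
    {v u : Fin n} (hr : elimRank cl par v ≤ elimRank cl par u)
    (ha : (cliqueForest cl par).Adj v u) :
    (cl u = cl v ∧ (par v = none ∨ par u = par v)) ∨ par v = some (cl u) := by
  obtain ⟨hne, h | h | h⟩ := ha
  · left
    refine ⟨h.symm, ?_⟩
    rcases hv : par v with _ | a
    · simp
    · rcases hu : par u with _ | b
      · simp [elimRank, hv, hu] at hr; omega
      · simp [hP.unique v u a b h hv hu]
  · exact Or.inr h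
  · have := hP.lt _ _ h
    unfold elimRank at hr
    rw [h] at hr
    rcases hv : par v with _ | a <;> simp [hv] at hr <;> omega

theorem IsParent.isChordal {n : ℕ} {cl : Fin n → ℕ} {par : Fin n → Option ℕ}
    (hP : IsParent cl par) : (cliqueForest cl par).IsChordal := by
  refine isChordal_of_elim _ (elimRank cl par) ?_
  intro v u w h1 h2 a1 a2 hne
  have l1 := hP.later h1 a1
  have l2 := hP.later h2 a2
  refine ⟨hne, ?_⟩
  rcases l1 with ⟨e1, f1⟩ | e1 <;> rcases l2 with ⟨e2, f2⟩ | e2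
  · exact Or.inl (e1.trans e2.symm)
  · rcases f1 with f1 | f1
    · simp [f1] at e2
    · exact Or.inr (Or.inl (f1.trans e2))
  · rcases f2 with f2 | f2
    · simp [f2] at e1
    · exact Or.inr (Or.inr (f2.trans e1))
  · rw [e1] at e2
    exact Or.inl (Option.some.inj e2)

theorem IsParent.colorable {n : ℕ} {cl : Fin n → ℕ} {par : Fin n → Option ℕ}
    (hP : IsParent cl par) (d : ℕ)
    (h1 : ∀ v, (Finset.univ.filter fun u => cl u = cl v).card ≤ d)
    (h2 : ∀ v c, par v = some c → (Finset.univ.filter fun u => cl u = cl v).card +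
      (Finset.univ.filter fun u => cl u = c).card ≤ d) :
    (cliqueForest cl par).Colorable d := by
  classical
  refine colorable_of_elim _ (elimRank cl par) d ?_
  intro v
  have hv : v ∈ Finset.univ.filter fun u => cl u = cl v := by simp
  rcases hp : par v with _ | c
  · refine lt_of_lt_of_le (Finset.card_lt_card ?_) (h1 v)
    rw [Finset.ssubset_iff_of_subset]
    · exact ⟨v, hv, by simp⟩
    · intro u hu
      simp only [Finset.mem_filter, Finset.mem_univ, true_and] at hu ⊢
      rcases hP.later hu.1 hu.2 with h | h
      · exact h.1
      · simp [hp] at h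
  · refine lt_of_lt_of_le (lt_of_lt_of_le (Finset.card_lt_card ?_)
      (Finset.card_union_le _ _)) (h2 v c hp)
    rw [Finset.ssubset_iff_of_subset]
    · exact ⟨v, by simp, by simp⟩
    · intro u hu
      simp only [Finset.mem_filter, Finset.mem_univ, true_and, Finset.mem_union] at hu ⊢
      rcases hP.later hu.1 hu.2 with h | h
      · exact Or.inl h.1
      · rw [hp] at h
        exact Or.inr (Option.some.inj h).symm

/-! ### Fixed order of arrival and the buffer -/

/-- The first `m * h` vertices are cut into consecutive blocks of length `h`, labelled `0, …, m - 1` by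
`cl`; later vertices get labels at least `m`. The labels do not depend on the algorithm: only the
parents are chosen adaptively. -/
structure Layout {n : ℕ} (cl : Fin n → ℕ) (h m : ℕ) : Prop where
  pos : 0 < h
  room : m * h ≤ n
  early : ∀ v : Fin n, v.val < m * h → cl v = v.val / h
  late : ∀ v : Fin n, m * h ≤ v.val → m ≤ cl v

theorem Layout.cl_lt_iff {n : ℕ} {cl : Fin n → ℕ} {h m : ℕ} (L : Layout cl h m) {C : ℕ}
    (hC : C ≤ m) (v : Fin n) : cl v < C ↔ v.val < C * h := by
  have hm : C * h ≤ m * h := Nat.mul_le_mul_right h hC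
  by_cases hv : v.val < m * h
  · rw [L.early v hv, Nat.div_lt_iff_lt_mul L.pos]
  · have := L.late v (by omega)
    constructor <;> intro <;> omega

theorem Layout.card {n : ℕ} {cl : Fin n → ℕ} {h m : ℕ} (L : Layout cl h m) {c : ℕ}
    (hc : c < m) : (Finset.univ.filter fun u => cl u = c).card = h := by
  have hm : (c + 1) * h ≤ m * h := Nat.mul_le_mul_right h hc
  have hr := L.room
  have hs : (c + 1) * h = c * h + h := by ring
  have : ∀ u : Fin n, cl u = c ↔ c * h ≤ u.val ∧ u.val < c * h + h := by
    intro u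
    have h1 := L.cl_lt_iff (C := c) hc.le u
    have h2 := L.cl_lt_iff (C := c + 1) hc u
    omega
  simp only [this]
  rw [← Finset.card_map Fin.valEmbedding]
  have : Finset.map Fin.valEmbedding (Finset.univ.filter fun u : Fin n =>
      c * h ≤ u.val ∧ u.val < c * h + h) = Finset.Ico (c * h) (c * h + h) := by
    ext x
    simp only [Finset.mem_map, Finset.mem_filter, Finset.mem_univ, true_and, Finset.mem_Ico,
      Fin.valEmbedding_apply]
    constructor
    · rintro ⟨u, hu, rfl⟩; exact hu
    · intro hx; exact ⟨⟨x, by omega⟩, hx, rfl⟩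
  rw [this]; simp

/-- The state after the cliques with labels below `C` have been presented: the groups `R j`, `j < N`,
consist of vertices that are already colored and lie in root cliques, no clique meets two groups,
and each group carries at least `g` colors. The times `τ` are taken on the graph that has no edges
between different cliques apart from those chosen so far. Values `R j` with `N ≤ j` are junk. -/
structure Stage {n : ℕ} (cl : Fin n → ℕ) (τ : SimpleGraph (Fin n) → Fin n → Fin n)
    (col : SimpleGraph (Fin n) → Fin n → ℕ) (h C N g : ℕ) (par : Fin n → Option ℕ)
    (R : ℕ → Finset (Fin n)) : Prop where
  parent : IsParent cl par
  par_lt : ∀ u c, par u = some c → c < C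
  cl_lt : ∀ j < N, ∀ u ∈ R j, cl u < C
  root : ∀ j < N, ∀ u ∈ R j, ∀ v, cl v = cl u → par v = none
  disj : ∀ i < N, ∀ j < N, ∀ u ∈ R i, ∀ v ∈ R j, cl u = cl v → i = j
  done : ∀ j < N, ∀ u ∈ R j, (τ (cliqueForest cl par) u).val < C * h
  colors : ∀ j < N, g ≤ ((R j).image (col (cliqueForest cl par))).card

/-- Vertices colored before time `T` keep their color when edges at vertices from `T` on change. -/
theorem IsBufferAlg.stable {n b : ℕ} {τ : SimpleGraph (Fin n) → Fin n → Fin n}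
    {col : SimpleGraph (Fin n) → Fin n → ℕ} (hA : IsBufferAlg b τ col)
    {G G' : SimpleGraph (Fin n)} {T : ℕ}
    (hG : ∀ u v : Fin n, u.val < T → v.val < T → (G.Adj u v ↔ G'.Adj u v))
    {v : Fin n} (hv : (τ G v).val < T) : τ G v = τ G' v ∧ col G v = col G' v :=
  hA.2.2.1 (τ G v) G G'
    (fun x y hx hy => hG x y (lt_of_le_of_lt hx hv) (lt_of_le_of_lt hy hv)) v le_rfl

theorem IsBufferAlg.card_pending {n b : ℕ} {τ : SimpleGraph (Fin n) → Fin n → Fin n}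
    {col : SimpleGraph (Fin n) → Fin n → ℕ} (hA : IsBufferAlg b τ col)
    (G : SimpleGraph (Fin n)) (T : ℕ) (hT : T ≤ n) :
    (Finset.univ.filter fun v : Fin n => v.val < T ∧ T ≤ (τ G v).val).card ≤ b := by
  rcases Nat.eq_zero_or_pos T with rfl | hpos
  · simp
  · refine le_trans (le_of_eq ?_) (hA.2.1 G ⟨T - 1, by omega⟩)
    rw [← Set.ncard_coe_finset]
    congr 1
    ext v
    simp only [Finset.coe_filter, Finset.mem_univ, true_and, Set.mem_ofPred_eq, Fin.le_def,
      Fin.lt_def]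
    omega

/-- Once the cliques `C, …, C + p - 1` of size `2 * s - 1` have been presented, all but at most `b / s`
of them have `s` colored vertices: each exception keeps at least `s` vertices in the buffer. -/
theorem few_failures {n b : ℕ} {τ : SimpleGraph (Fin n) → Fin n → Fin n}
    {col : SimpleGraph (Fin n) → Fin n → ℕ} (hA : IsBufferAlg b τ col)
    {cl : Fin n → ℕ} {s m : ℕ} (hs : 0 < s) (L : Layout cl (2 * s - 1) m)
    (G : SimpleGraph (Fin n)) (C p : ℕ) (hCp : C + p ≤ m) :
    ((Finset.range p).filter fun j =>
      (Finset.univ.filter fun v => cl v = C + j ∧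
        (τ G v).val < (C + p) * (2 * s - 1)).card < s).card ≤ b / s := by
  set T := (C + p) * (2 * s - 1) with hT
  have hTn : T ≤ n := le_trans (Nat.mul_le_mul_right _ hCp) L.room
  rw [Nat.le_div_iff_mul_le hs]
  refine le_trans ?_ (hA.card_pending G T hTn)
  set U := (Finset.range p).filter fun j =>
      (Finset.univ.filter fun v => cl v = C + j ∧ (τ G v).val < T).card < s with hU
  have key : ∀ j ∈ U, s ≤
      (Finset.univ.filter fun v => cl v = C + j ∧ T ≤ (τ G v).val).card := by
    intro j hj
    simp only [hU, Finset.mem_filter, Finset.mem_range] at hj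
    have h1 := L.card (c := C + j) (by omega)
    have h2 := Finset.card_filter_add_card_filter_not
      (s := Finset.univ.filter fun u => cl u = C + j) (fun v => (τ G v).val < T)
    simp only [Finset.filter_filter, not_lt] at h2
    omega
  calc U.card * s = ∑ j ∈ U, s := by simp
    _ ≤ ∑ j ∈ U, (Finset.univ.filter fun v => cl v = C + j ∧ T ≤ (τ G v).val).card :=
        Finset.sum_le_sum key
    _ = (U.biUnion fun j => Finset.univ.filter fun v => cl v = C + j ∧ T ≤ (τ G v).val).card := by
        rw [Finset.card_biUnion]
        intro i _ j _ hij
        rw [Function.onFun, Finset.disjoint_left]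
        intro v hv hv'
        simp only [Finset.mem_filter, Finset.mem_univ, true_and] at hv hv'
        omega
    _ ≤ _ := by
        apply Finset.card_le_card
        intro v hv
        simp only [Finset.mem_biUnion, Finset.mem_filter, Finset.mem_univ, true_and, hU,
          Finset.mem_range] at hv ⊢
        obtain ⟨j, ⟨hj, -⟩, hv, hv'⟩ := hv
        exact ⟨(L.cl_lt_iff hCp v).1 (by omega), hv'⟩

/-- If `B` has fewer than `e` elements outside `A`, then `2 * e - 1` elements avoiding `A` enlarge `B`
by at least `e`. -/
theorem card_gain {α : Type*} [DecidableEq α] {A B Q : Finset α} {g e : ℕ} (he : 0 < e)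
    (hB : g ≤ B.card) (hAB : (B \ A).card < e) (hQ : 2 * e - 1 ≤ Q.card)
    (hd : Disjoint Q A) : g + e ≤ (B ∪ Q).card := by
  have h1 : (B ∪ Q).card + (B ∩ Q).card = B.card + Q.card := Finset.card_union_add_card_inter B Q
  have h2 : (B ∩ Q).card ≤ (B \ A).card := by
    apply Finset.card_le_card
    intro x hx
    simp only [Finset.mem_inter, Finset.mem_sdiff] at hx ⊢
    exact ⟨hx.1, fun h => Finset.disjoint_left.1 hd hx.2 h⟩
  omega

/-! ### The adversary -/

/-- For each bad pair `j`, the group `R (2 * j)` receives the clique `C + j` as parent, and nothing else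
changes. This is well defined because the groups are disjoint. -/
theorem exists_attach {n : ℕ} {cl : Fin n → ℕ} {τ : SimpleGraph (Fin n) → Fin n → Fin n}
    {col : SimpleGraph (Fin n) → Fin n → ℕ} {h C p g : ℕ} {par : Fin n → Option ℕ}
    {R : ℕ → Finset (Fin n)} (S : Stage cl τ col h C (2 * p) g par R) (bad : ℕ → Prop) :
    ∃ par' : Fin n → Option ℕ,
      (∀ j < p, bad j → ∀ u ∈ R (2 * j), par' u = some (C + j)) ∧
      (∀ u, (∀ j < p, bad j → u ∉ R (2 * j)) → par' u = par u) := by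
  classical
  refine ⟨fun u => if hu : ∃ j, j < p ∧ bad j ∧ u ∈ R (2 * j) then some (C + hu.choose)
    else par u, ?_, ?_⟩
  · intro j hj hb u hu
    have hex : ∃ j, j < p ∧ bad j ∧ u ∈ R (2 * j) := ⟨j, hj, hb, hu⟩
    have hs := hex.choose_spec
    have := S.disj _ (by omega) _ (by omega) u hu u hs.2.2 rfl
    simp only [dif_pos hex]
    congr 2
    omega
  · intro u hu
    refine dif_neg ?_
    rintro ⟨j, hj, hb, hju⟩
    exact hu j hj hb hju

/-- One round of the adversary: from `2 * p` groups to `N ≤ p - b / s` groups with `e` more colors. -/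
theorem Stage.step {n b : ℕ} {τ : SimpleGraph (Fin n) → Fin n → Fin n}
    {col : SimpleGraph (Fin n) → Fin n → ℕ} (hA : IsBufferAlg b τ col)
    {cl : Fin n → ℕ} {e s m : ℕ} (he : 0 < e) (hs : s = 2 * e - 1)
    (L : Layout cl (2 * s - 1) m)
    {C p g : ℕ} (hCp : C + p ≤ m) {par : Fin n → Option ℕ} {R : ℕ → Finset (Fin n)}
    (S : Stage cl τ col (2 * s - 1) C (2 * p) g par R) {N : ℕ} (hN : N + b / s ≤ p) :
    ∃ par' R', Stage cl τ col (2 * s - 1) (C + p) N (g + e) par' R' := by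
  classical
  set G := cliqueForest cl par with hG
  set K : ℕ → Finset ℕ := fun j => (R j).image (col G) with hK
  set bad : ℕ → Prop := fun j => (K (2 * j + 1) \ K (2 * j)).card < e with hbad
  obtain ⟨par', hp1, hp2⟩ := exists_attach S bad
  set G' := cliqueForest cl par' with hG'
  set T := (C + p) * (2 * s - 1) with hT
  -- every value of `par'` is inherited from `par` or is a clique of the current round
  have hcase : ∀ u c, par' u = some c →
      (∃ j < p, bad j ∧ u ∈ R (2 * j) ∧ c = C + j) ∨ par u = some c := by
    intro u c hu
    by_cases hex : ∀ j < p, bad j → u ∉ R (2 * j)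
    · exact Or.inr (hp2 u hex ▸ hu)
    · push Not at hex
      obtain ⟨j, hj, hb, hm⟩ := hex
      have := hp1 j hj hb u hm
      rw [hu] at this
      exact Or.inl ⟨j, hj, hb, hm, Option.some.inj this⟩
  -- the edges chosen in this round are invisible among the earlier vertices
  have hsame : ∀ u v : Fin n, u.val < C * (2 * s - 1) → v.val < C * (2 * s - 1) →
      (G.Adj u v ↔ G'.Adj u v) := by
    have hpar : ∀ u v : Fin n, cl v < C → (par' u = some (cl v) ↔ par u = some (cl v)) := by
      intro u v hv
      by_cases hex : ∀ j < p, bad j → u ∉ R (2 * j)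
      · rw [hp2 u hex]
      · push Not at hex
        obtain ⟨j, hj, hb, hm⟩ := hex
        rw [hp1 j hj hb u hm, S.root _ (by omega) u hm u rfl]
        simp only [Option.some.injEq, reduceCtorEq, iff_false]
        omega
    intro u v hu hv
    have hu' := (L.cl_lt_iff (C := C) (by omega) u).2 hu
    have hv' := (L.cl_lt_iff (C := C) (by omega) v).2 hv
    simp only [hG, hG', cliqueForest, hpar u v hv', hpar v u hu']
  have hst : ∀ j < 2 * p, ∀ u ∈ R j, τ G u = τ G' u ∧ col G u = col G' u :=
    fun j hj u hu => hA.stable hsame (S.done j hj u hu)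
  have hK' : ∀ j < 2 * p, (R j).image (col G') = K j := by
    intro j hj
    refine Finset.image_congr fun u hu => ?_
    exact ((hst j hj u hu).2).symm
  have hparent : IsParent cl par' := by
    constructor
    · intro u c hu
      rcases hcase u c hu with ⟨j, hj, -, hm, rfl⟩ | hu
      · have := S.cl_lt _ (by omega) u hm
        omega
      · exact S.parent.lt u c hu
    · intro u v a c huv hu hv
      rcases hcase u a hu with ⟨i, hi, -, hmi, rfl⟩ | hu <;>
        rcases hcase v c hv with ⟨j, hj, -, hmj, rfl⟩ | hv
      · have := S.disj _ (by omega) _ (by omega) u hmi v hmj huv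
        omega
      · rw [S.root _ (by omega) u hmi v huv.symm] at hv
        simp at hv
      · rw [S.root _ (by omega) v hmj u huv] at hu
        simp at hu
      · exact S.parent.unique u v a c huv hu hv
  -- the colored part of the `j`-th new clique
  set Q : ℕ → Finset (Fin n) := fun j => Finset.univ.filter fun v => cl v = C + j ∧
        (τ G' v).val < T with hQ
  set good := (Finset.range p).filter fun j => ¬ (Q j).card < s with hgood
  have hgc : N ≤ good.card := by
    have h1 := few_failures hA (by omega) L G' C p hCp
    have h2 := Finset.card_filter_add_card_filter_not
      (s := Finset.range p) (fun j => (Q j).card < s)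
    simp only [Finset.card_range] at h2
    change _ + good.card = p at h2
    have h3 : ((Finset.range p).filter fun j => (Q j).card < s).card ≤ b / s := h1
    omega
  obtain ⟨f, hf, hfi⟩ : ∃ f : ℕ → ℕ, (∀ i < N, f i ∈ good) ∧
      ∀ i < N, ∀ j < N, f i = f j → i = j := by
    obtain ⟨φ⟩ := Function.Embedding.nonempty_of_card_le (α := Fin N) (β := good)
      (by simpa using hgc)
    refine ⟨fun i => if hi : i < N then (φ ⟨i, hi⟩).1 else 0, ?_, ?_⟩
    · intro i hi
      simp [hi]
    · intro i hi j hj hij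
      simp only [hi, hj, dif_pos] at hij
      simpa using φ.injective (Subtype.ext hij)
  set R₀ : ℕ → Finset (Fin n) := fun j =>
    if bad j then R (2 * j + 1) ∪ Q j else R (2 * j) ∪ R (2 * j + 1) with hR₀
  have hmem : ∀ j, ∀ u ∈ R₀ j, (bad j ∧ u ∈ Q j) ∨
      (u ∈ R (2 * j) ∧ ¬ bad j) ∨ u ∈ R (2 * j + 1) := by
    intro j u hu
    by_cases hb : bad j
    · simp only [hR₀, if_pos hb, Finset.mem_union] at hu
      tauto
    · simp only [hR₀, if_neg hb, Finset.mem_union] at hu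
      tauto
  have hmem' : ∀ j, ∀ u ∈ R₀ j, u ∈ Q j ∨
      ∃ i, (i = 2 * j ∧ ¬ bad j ∨ i = 2 * j + 1) ∧ u ∈ R i := by
    intro j u hu
    rcases hmem j u hu with h | h | h
    · exact Or.inl h.2
    · exact Or.inr ⟨_, Or.inl ⟨rfl, h.2⟩, h.1⟩
    · exact Or.inr ⟨_, Or.inr rfl, h⟩
  have hQcl : ∀ j, ∀ u ∈ Q j, cl u = C + j ∧ (τ G' u).val < T := by
    intro j u hu
    simpa [hQ] using hu
  have hfp : ∀ i < N, f i < p := by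
    intro i hi
    have := hf i hi
    simp only [hgood, Finset.mem_filter, Finset.mem_range] at this
    exact this.1
  refine ⟨par', fun i => R₀ (f i), hparent, ?_, ?_, ?_, ?_, ?_, ?_⟩
  · intro u c hu
    rcases hcase u c hu with ⟨j, hj, -, -, rfl⟩ | hu
    · omega
    · have := S.par_lt u c hu
      omega
  · intro i hi u hu
    have := hfp i hi
    rcases hmem' _ u hu with h | ⟨k, hk, h⟩
    · have := (hQcl _ u h).1
      omega
    · have := S.cl_lt k (by omega) u h
      omega
  · intro i hi u hu v hv
    have := hfp i hi
    by_contra hne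
    obtain ⟨c, hc⟩ := Option.ne_none_iff_exists'.1 hne
    rcases hmem' _ u hu with h | ⟨k, hk, h⟩
    · have h1 := (hQcl _ u h).1
      rcases hcase v c hc with ⟨j, hj, -, hm, rfl⟩ | hc
      · have := S.cl_lt _ (by omega) v hm
        omega
      · have h2 := S.par_lt v c hc
        have h3 := S.parent.lt v c hc
        omega
    · rcases hcase v c hc with ⟨j, hj, hb, hm, rfl⟩ | hc
      · have h2 := S.disj _ (by omega) _ (by omega) v hm u h hv
        rcases hk with ⟨hk, hnb⟩ | hk
        · have : j = f i := by omega
          exact hnb (this ▸ hb)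
        · omega
      · rw [S.root k (by omega) u h v hv] at hc
        simp at hc
  · intro i hi j hj u hu v hv huv
    have h1 := hfp i hi
    have h2 := hfp j hj
    apply hfi i hi j hj
    rcases hmem' _ u hu with h | ⟨k, hk, h⟩ <;> rcases hmem' _ v hv with h' | ⟨k', hk', h'⟩
    · have := (hQcl _ u h).1
      have := (hQcl _ v h').1
      omega
    · have := (hQcl _ u h).1
      have := S.cl_lt k' (by omega) v h'
      omega
    · have := (hQcl _ v h').1
      have := S.cl_lt k (by omega) u h
      omega
    · have := S.disj k (by omega) k' (by omega) u h v h' huv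
      omega
  · intro i hi u hu
    have h1 := hfp i hi
    rcases hmem' _ u hu with h | ⟨k, hk, h⟩
    · exact (hQcl _ u h).2
    · rw [← hG', ← (hst k (by omega) u h).1]
      refine lt_of_lt_of_le (S.done k (by omega) u h) (Nat.mul_le_mul_right _ (by omega))
  · intro i hi
    have h1 := hfp i hi
    have hgd := hf i hi
    simp only [hgood, Finset.mem_filter, Finset.mem_range, not_lt] at hgd
    set j := f i with hj
    rw [← hG']
    have hB : g ≤ (K (2 * j + 1)).card := S.colors _ (by omega)
    have hAc : g ≤ (K (2 * j)).card := S.colors _ (by omega)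
    by_cases hb : bad j
    · simp only [hR₀, if_pos hb]
      rw [Finset.image_union, hK' _ (by omega)]
      refine card_gain he hB hb ?_ ?_
      · rw [Finset.card_image_of_injOn]
        · omega
        · intro x hx y hy hxy
          by_contra hne
          refine hA.2.2.2 G' x y ⟨hne, Or.inl ?_⟩ hxy
          rw [(hQcl j x hx).1, (hQcl j y hy).1]
      · rw [Finset.disjoint_left, ← hK' _ (by omega)]
        intro c hc hc'
        obtain ⟨x, hx, rfl⟩ := Finset.mem_image.1 hc
        obtain ⟨y, hy, hxy⟩ := Finset.mem_image.1 hc'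
        have hx1 := (hQcl j x hx).1
        refine hA.2.2.2 G' y x ⟨?_, Or.inr (Or.inl ?_)⟩ hxy
        · rintro rfl
          have := S.cl_lt _ (by omega) y hy
          omega
        · rw [hp1 j hgd.1 hb y hy, hx1]
    · simp only [hR₀, if_neg hb]
      rw [Finset.image_union, hK' _ (by omega), hK' _ (by omega)]
      have h3 : e ≤ (K (2 * j + 1) \ K (2 * j)).card := not_lt.1 hb
      have h4 : K (2 * j) ∪ K (2 * j + 1) = K (2 * j) ∪ (K (2 * j + 1) \ K (2 * j)) := by simp
      rw [h4, Finset.card_union_of_disjoint Finset.disjoint_sdiff]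
      omega

/-- The state after `k` of `K` rounds, with `r` rounds to go. The bound on `C` holds because a round with
`4 * q` groups presents `2 * q` cliques and leaves `q` groups. In round zero all groups are
empty. -/
theorem exists_stage {n b : ℕ} {τ : SimpleGraph (Fin n) → Fin n → Fin n}
    {col : SimpleGraph (Fin n) → Fin n → ℕ} (hA : IsBufferAlg b τ col)
    {cl : Fin n → ℕ} {e s K : ℕ} (he : 0 < e) (hs : s = 2 * e - 1)
    (L : Layout cl (2 * s - 1) (4 ^ K * (b / s + 1))) (k r : ℕ) (hkr : k + r = K) :
    ∃ C par R, C + 4 ^ r * (b / s + 1) ≤ 4 ^ K * (b / s + 1) ∧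
      Stage cl τ col (2 * s - 1) C (4 ^ r * (b / s + 1)) (k * e) par R := by
  induction k generalizing r with
  | zero =>
    refine ⟨0, fun _ => none, fun _ => ∅, ?_, ?_⟩
    · have : r = K := by omega
      simp [this]
    · exact ⟨⟨by simp, by simp⟩, by simp, by simp, by simp, by simp, by simp, by simp⟩
  | succ k ih =>
    obtain ⟨C, par, R, hC, S⟩ := ih (r + 1) (by omega)
    have hp : 4 ^ (r + 1) * (b / s + 1) = 2 * (2 * (4 ^ r * (b / s + 1))) := by ring
    rw [hp] at S hC
    have h1 : b / s + 1 ≤ 4 ^ r * (b / s + 1) := Nat.le_mul_of_pos_left _ (by positivity)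
    obtain ⟨par', R', S'⟩ := S.step hA he hs L (N := 4 ^ r * (b / s + 1)) (by omega) (by omega)
    refine ⟨_, par', R', ?_, (Nat.succ_mul k e).symm ▸ S'⟩
    omega

/-! ### The number of rounds -/

/-- There is room for `K` rounds and a `d`-clique. With `y = n ^ (ε / 2)` one has `4 ^ K ≤ y / 4`,
`b * y ^ 2 ≤ n` and `y * d ≤ n`. -/
theorem exists_depth {d n b : ℕ} {ε : ℝ} (hd : 2 ≤ d) (hε : 0 < ε) (hε1 : ε ≤ 1)
    (hn : max (2 * (d : ℝ) ^ 2) ((2 : ℝ) ^ ((7 : ℝ) / ε)) ≤ (n : ℝ))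
    (hb : (b : ℝ) ≤ (n : ℝ) ^ ((1 : ℝ) - ε)) :
    ∃ K : ℕ, 4 ^ K * (2 * b + d) + d ≤ n ∧ ε * Real.logb 2 n / 4 - 2 ≤ K := by
  have hn1 : 2 * (d : ℝ) ^ 2 ≤ n := le_trans (le_max_left _ _) hn
  have hn2 : (2 : ℝ) ^ ((7 : ℝ) / ε) ≤ n := le_trans (le_max_right _ _) hn
  have hd' : (2 : ℝ) ≤ d := by exact_mod_cast hd
  have hnpos : (0 : ℝ) < n := by nlinarith
  have hn1' : (1 : ℝ) ≤ n := by nlinarith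
  set x := ε * Real.logb 2 n with hx
  have hx7 : 7 ≤ x := by
    have h1 : 7 / ε ≤ Real.logb 2 n := by
      rw [Real.le_logb_iff_rpow_le (by norm_num) hnpos]; exact hn2
    rw [div_le_iff₀ hε] at h1
    linarith
  set y := (n : ℝ) ^ (ε / 2) with hy
  have hypos : 0 < y := Real.rpow_pos_of_pos hnpos _
  have hyx : y = (2 : ℝ) ^ (x / 2) := by
    have h2 : (n : ℝ) = (2 : ℝ) ^ (Real.logb 2 n) :=
      (Real.rpow_logb (by norm_num) (by norm_num) hnpos).symm
    rw [hy]
    conv_lhs => rw [h2]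
    rw [← Real.rpow_mul (by norm_num)]
    congr 1
    rw [hx]; ring
  have hysq : y * y = (n : ℝ) ^ ε := by
    rw [hy, ← Real.rpow_add hnpos]; ring_nf
  have hyn : y * y ≤ n := by
    rw [hysq]
    calc (n : ℝ) ^ ε ≤ (n : ℝ) ^ (1 : ℝ) := Real.rpow_le_rpow_of_exponent_le hn1' hε1
      _ = n := Real.rpow_one _
  have hby : b * (y * y) ≤ n := by
    rw [hysq]
    calc (b : ℝ) * (n : ℝ) ^ ε ≤ (n : ℝ) ^ (1 - ε) * (n : ℝ) ^ ε := by gcongr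
      _ = n := by rw [← Real.rpow_add hnpos]; simp
  have hy2 : 2 ≤ y := by
    rw [hyx]
    calc (2 : ℝ) = 2 ^ (1 : ℝ) := by simp
      _ ≤ 2 ^ (x / 2) := Real.rpow_le_rpow_of_exponent_le (by norm_num) (by linarith)
  refine ⟨⌊x / 4 - 1⌋₊, ?_, ?_⟩
  · set K := ⌊x / 4 - 1⌋₊ with hK
    have hK1 : (K : ℝ) ≤ x / 4 - 1 := Nat.floor_le (by linarith)
    have h4 : (4 : ℝ) ^ K * 4 ≤ y := by
      rw [hyx]
      calc (4 : ℝ) ^ K * 4 = 2 ^ ((2 * K + 2 : ℕ) : ℝ) := by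
            rw [Real.rpow_natCast, pow_add, pow_mul]; norm_num
        _ ≤ 2 ^ (x / 2) := by
            apply Real.rpow_le_rpow_of_exponent_le (by norm_num)
            push_cast; linarith
    have hyd : y * d ≤ n := by
      apply le_of_sq_le_sq _ hnpos.le
      nlinarith [mul_le_mul hyn hn1 (by positivity) hnpos.le]
    have hyb : y * b * 2 ≤ n := by nlinarith [mul_nonneg hypos.le (Nat.cast_nonneg (α := ℝ) b)]
    have hdn : (d : ℝ) * 4 ≤ n := by nlinarith
    have hfin : (4 : ℝ) ^ K * (2 * b + d) + d ≤ n := by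
      have : (4 : ℝ) ^ K * 4 * (2 * b + d) ≤ y * (2 * b + d) := by gcongr
      nlinarith
    exact_mod_cast hfin
  · have := Nat.lt_floor_add_one (x / 4 - 1)
    linarith

theorem buffer_lower_bound_chordal :
    ∃ α : ℝ, 0 < α ∧
      ∀ (d : ℕ), 2 ≤ d →
        ∀ (ε : ℝ), 0 < ε → ε ≤ 1 →
          ∀ (n : ℕ), max (2 * (d : ℝ) ^ 2) ((2 : ℝ) ^ ((7 : ℝ) / ε)) ≤ (n : ℝ) →
            ∀ (b : ℕ), (b : ℝ) ≤ (n : ℝ) ^ ((1 : ℝ) - ε) →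
              ∀ (τ : SimpleGraph (Fin n) → Fin n → Fin n)
                (col : SimpleGraph (Fin n) → Fin n → ℕ),
                IsBufferAlg b τ col →
                ∃ G : SimpleGraph (Fin n), G.IsChordal ∧ G.chromaticNumber = d ∧
                  α * ε * d * Real.logb 2 n ≤ (colorsUsedBuf col G : ℝ) := by
  classical
  refine ⟨1 / 128, by norm_num, ?_⟩
  intro d hd ε hε hε1 n hn b hb τ col hA
  obtain ⟨K, hroom, hKlog⟩ := exists_depth hd hε hε1 hn hb
  -- `h = 4 * e - 3` is then at most `d / 2`, while `e ≥ d / 16`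
  obtain ⟨e, he⟩ : ∃ e, e = (d + 6) / 8 := ⟨_, rfl⟩
  obtain ⟨s, hs⟩ : ∃ s, s = 2 * e - 1 := ⟨_, rfl⟩
  obtain ⟨h, hh⟩ : ∃ h, h = 2 * s - 1 := ⟨_, rfl⟩
  obtain ⟨m, hm⟩ : ∃ m, m = 4 ^ K * (b / s + 1) := ⟨_, rfl⟩
  have hmh : m * h + d ≤ n := by
    refine le_trans (Nat.add_le_add_right ?_ d) hroom
    rw [hm, mul_assoc]
    refine Nat.mul_le_mul_left _ ?_
    have h1 : b / s * h ≤ b / s * (2 * s) := Nat.mul_le_mul_left _ (by omega)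
    have h2 : b / s * (2 * s) = 2 * (b / s * s) := by ring
    have h3 := Nat.div_mul_le_self b s
    rw [add_mul]
    omega
  -- the vertices after the blocks form a `d`-clique, labelled `m`, and singletons
  obtain ⟨cl, hcl⟩ : ∃ cl : Fin n → ℕ, cl = fun v =>
    if v.val < m * h then v.val / h else if v.val < m * h + d then m else m + v.val := ⟨_, rfl⟩
  have L : Layout cl h m := by
    refine ⟨by omega, by omega, ?_, ?_⟩
    · intro v hv
      simp [hcl, hv]
    · intro v hv
      simp only [hcl]
      split_ifs <;> omega
  have L' := L
  rw [hm, hh] at L'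
  obtain ⟨C, par, R, hC, S⟩ := exists_stage hA (by omega) hs L' K 0 (by omega)
  have hlate : ∀ u, cl u = m ↔ m * h ≤ u.val ∧ u.val < m * h + d := by
    intro u
    have := L.cl_lt_iff le_rfl u
    constructor
    · intro hu
      refine ⟨by omega, ?_⟩
      by_contra hcon
      simp only [hcl] at hu
      split_ifs at hu <;> omega
    · intro hu
      simp only [hcl]
      split_ifs <;> omega
  have hcard : (Finset.univ.filter fun u => cl u = m).card = d := by
    simp only [hlate]
    rw [← Finset.card_map Fin.valEmbedding]
    have : Finset.map Fin.valEmbedding (Finset.univ.filter fun u : Fin n =>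
        m * h ≤ u.val ∧ u.val < m * h + d) = Finset.Ico (m * h) (m * h + d) := by
      ext x
      simp only [Finset.mem_map, Finset.mem_filter, Finset.mem_univ, true_and, Finset.mem_Ico,
        Fin.valEmbedding_apply]
      constructor
      · rintro ⟨u, hu, rfl⟩; exact hu
      · intro hx; exact ⟨⟨x, by omega⟩, hx, rfl⟩
    rw [this]; simp
  have hcolor : (cliqueForest cl par).Colorable d := by
    refine S.parent.colorable d ?_ ?_
    · intro v
      rcases lt_trichotomy (cl v) m with hv | hv | hv
      · rw [L.card hv]; omega
      · rw [hv, hcard]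
      · refine le_trans (Finset.card_le_one.2 ?_) (by omega : 1 ≤ d)
        have hval : ∀ u, m < cl u → cl u = m + u.val := by
          intro u hu
          have h1 := L.cl_lt_iff le_rfl u
          have h2 := hlate u
          simp only [hcl]
          split_ifs <;> omega
        intro u hu w hw
        simp only [Finset.mem_filter, Finset.mem_univ, true_and] at hu hw
        have h1 := hval u (by omega)
        have h2 := hval w (by omega)
        exact Fin.ext (by omega)
    · intro v c hv
      have h1 := S.parent.lt v c hv
      have h2 := S.par_lt v c hv
      rw [L.card (by omega), L.card (by omega)]
      omega
  have hclique : (cliqueForest cl par).IsClique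
      ((Finset.univ.filter fun u => cl u = m : Finset (Fin n)) : Set (Fin n)) := by
    intro u hu v hv hne
    simp only [Finset.coe_filter, Finset.mem_univ, true_and, Set.mem_ofPred_eq] at hu hv
    exact ⟨hne, Or.inl (hu.trans hv.symm)⟩
  refine ⟨cliqueForest cl par, S.parent.isChordal, ?_, ?_⟩
  · refine le_antisymm hcolor.chromaticNumber_le ?_
    have := hclique.card_le_chromaticNumber
    rwa [hcard] at this
  · have c1 : d ≤ colorsUsedBuf col (cliqueForest cl par) := by
      rw [← hcard, ← Finset.card_image_of_injOn (f := col (cliqueForest cl par))]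
      · exact Finset.card_le_card (Finset.image_subset_image (Finset.subset_univ _))
      · intro u hu v hv huv
        by_contra hne
        exact hA.2.2.2 _ u v (hclique hu hv hne) huv
    have c2 : K * e ≤ colorsUsedBuf col (cliqueForest cl par) :=
      le_trans (S.colors 0 (by positivity))
        (Finset.card_le_card (Finset.image_subset_image (Finset.subset_univ _)))
    have c3 : d ≤ 16 * e := by omega
    have c1' : (d : ℝ) ≤ colorsUsedBuf col (cliqueForest cl par) := by exact_mod_cast c1
    have c2' : (K : ℝ) * e ≤ colorsUsedBuf col (cliqueForest cl par) := by exact_mod_cast c2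
    have c3' : (d : ℝ) ≤ 16 * e := by exact_mod_cast c3
    have hdpos : (0 : ℝ) ≤ d := Nat.cast_nonneg d
    have c4 : (K : ℝ) * d ≤ K * (16 * e) := by gcongr
    have c5 := mul_le_mul_of_nonneg_right hKlog hdpos
    nlinarith
end

section
/- There exists a constant α > 0 such that for every real number ε with 0 < ε ≤ 1, every natural number n with (n : ℝ) ≥ 2^(7/ε), every natural number b with (b : ℝ) ≤ n^(1−ε), and every deterministic online coloring algorithm with a reordering buffer of size b on n-vertex graphs, there exists a simple graph G on Fin n that is a tree (connected and acyclic) such that the number of colors used by the algorithm on G is at least α·ε·log n, where log is the base-2 logarithm. -/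
/-! ### Forests with a transversal of their components -/

/-- `G` is a forest and `P` contains exactly one vertex of each of its components. The map `r`
sends a vertex to the element of `P` in its component. -/
def IsTransversal {V : Type*} (G : SimpleGraph V) (P : Set V) : Prop :=
  G.IsAcyclic ∧ ∃ r : V → V, (∀ u w, G.Adj u w → r u = r w) ∧ (∀ u, G.Reachable u (r u)) ∧
    (∀ x ∈ P, r x = x) ∧ ∀ u, r u ∈ P

lemma isTransversal_bot {V : Type*} : IsTransversal (⊥ : SimpleGraph V) Set.univ :=
  ⟨SimpleGraph.isAcyclic_bot, id, by simp, fun u => SimpleGraph.Reachable.refl u, by simp, by simp⟩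

/-- Merging the components of `v` and `s` by an edge, with `v` representing the union. -/
lemma IsTransversal.edge {V : Type*} {G : SimpleGraph V} {P : Set V} (h : IsTransversal G P)
    {v s : V} (hv : v ∈ P) (hs : s ∈ P) (hvs : v ≠ s) :
    IsTransversal (G ⊔ SimpleGraph.edge v s) (P \ {s}) := by
  classical
  obtain ⟨hac, r, hr1, hr2, hr3, hr4⟩ := h
  have hreach : ∀ u w, G.Reachable u w → r u = r w := by
    rintro u w ⟨p⟩
    induction p with
    | nil => rfl
    | cons h _ ih => exact (hr1 _ _ h).trans ih
  have hle : G ≤ G ⊔ SimpleGraph.edge v s := le_sup_left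
  have hvs' : (G ⊔ SimpleGraph.edge v s).Adj s v := by
    simp [SimpleGraph.edge_adj, hvs.symm]
  refine ⟨hac.sup_edge_of_not_reachable ?_, fun u => if r u = s then v else r u, ?_, ?_, ?_, ?_⟩
  · intro hvr
    have := hreach _ _ hvr
    rw [hr3 v hv, hr3 s hs] at this
    exact hvs this
  · intro u w huw
    rw [SimpleGraph.sup_adj, SimpleGraph.edge_adj] at huw
    rcases huw with huw | ⟨⟨rfl, rfl⟩ | ⟨rfl, rfl⟩, -⟩
    · simp [hr1 u w huw]
    · simp [hr3 _ hs, hr3 _ hv]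
    · simp [hr3 _ hs, hr3 _ hv]
  · intro u
    by_cases hu : r u = s
    · simp only [hu, if_true]
      have := (hr2 u).mono hle
      rw [hu] at this
      exact this.trans hvs'.reachable
    · simp only [hu, if_false]
      exact (hr2 u).mono hle
  · rintro x ⟨hx, hxs⟩
    have hxs' : x ≠ s := hxs
    simp [hr3 x hx, hxs']
  · intro u
    by_cases hu : r u = s
    · simp [hu, hv, hvs]
    · simp [hu, hr4]

/-- Joining `v ∈ P` to a set `S` of other representatives. -/
lemma IsTransversal.star {V : Type*} {G : SimpleGraph V} {P : Set V} (h : IsTransversal G P)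
    {v : V} (hv : v ∈ P) (S : Finset V) (hS : (S : Set V) ⊆ P) (hvS : v ∉ S) :
    ∃ G' : SimpleGraph V, IsTransversal G' (P \ S) ∧
      ∀ u w, G'.Adj u w ↔ G.Adj u w ∨ (u = v ∧ w ∈ S) ∨ (w = v ∧ u ∈ S) := by
  classical
  induction S using Finset.induction_on with
  | empty => exact ⟨G, by simpa using h, by simp⟩
  | insert s S hs ih =>
    obtain ⟨G', hG', hadj⟩ := ih (fun x hx => hS (by simpa using Or.inr hx))
      (fun hx => hvS (Finset.mem_insert_of_mem hx))
    have hvs : v ≠ s := fun e => hvS (by simp [e])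
    have hvS' : v ∉ S := fun hx => hvS (Finset.mem_insert_of_mem hx)
    refine ⟨G' ⊔ SimpleGraph.edge v s, ?_, ?_⟩
    · have := hG'.edge (v := v) (s := s) ⟨hv, by simpa using hvS'⟩
        ⟨hS (by simp), by simpa using hs⟩ hvs
      convert this using 1
      ext x
      simp only [Finset.coe_insert, Set.mem_sdiff, Set.mem_insert_iff, Set.mem_singleton_iff]
      tauto
    · intro u w
      rw [SimpleGraph.sup_adj, SimpleGraph.edge_adj, hadj]
      grind

/-! ### Graphs agreeing on the arrived vertices -/

/-- `G` and `H` agree on the first `t` vertices `0, …, t - 1`. -/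
def AgreeBefore {n : ℕ} (t : ℕ) (G H : SimpleGraph (Fin n)) : Prop :=
  ∀ u v : Fin n, u.val < t → v.val < t → (G.Adj u v ↔ H.Adj u v)

lemma AgreeBefore.mono {n t s : ℕ} {G H : SimpleGraph (Fin n)} (h : AgreeBefore t G H)
    (hs : s ≤ t) : AgreeBefore s G H :=
  fun u v hu hv => h u v (by omega) (by omega)

lemma AgreeBefore.trans {n t : ℕ} {G H K : SimpleGraph (Fin n)} (h : AgreeBefore t G H)
    (h' : AgreeBefore t H K) : AgreeBefore t G K :=
  fun u v hu hv => (h u v hu hv).trans (h' u v hu hv)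

/-- A vertex coloured among the first `t` steps on `G` gets the same treatment on every graph
agreeing with `G` on the first `t` vertices. -/
lemma IsBufferAlg.eq_of_agree {n b : ℕ} {τ : SimpleGraph (Fin n) → Fin n → Fin n}
    {col : SimpleGraph (Fin n) → Fin n → ℕ} (h : IsBufferAlg b τ col) {t : ℕ}
    {G H : SimpleGraph (Fin n)} (hGH : AgreeBefore t G H) {v : Fin n} (hv : (τ G v).val < t) :
    τ G v = τ H v ∧ col G v = col H v := by
  refine h.2.2.1 (τ G v) G H (fun u w hu hw => hGH u w ?_ ?_) v le_rfl
  · exact lt_of_le_of_lt hu hv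
  · exact lt_of_le_of_lt hw hv

/-! ### Groups of distinctly coloured representatives -/

/-- `Q` is a group of level `k` on `G` at time `t`: it has `k` vertices, all coloured during the
first `t` steps, with pairwise distinct colours. -/
def IsGroup {n : ℕ} (τ : SimpleGraph (Fin n) → Fin n → Fin n)
    (col : SimpleGraph (Fin n) → Fin n → ℕ) (G : SimpleGraph (Fin n)) (t k : ℕ)
    (Q : Finset (Fin n)) : Prop :=
  Q.card = k ∧ (∀ x ∈ Q, (τ G x).val < t) ∧ Set.InjOn (col G) Q

lemma IsGroup.of_agree {n b : ℕ} {τ : SimpleGraph (Fin n) → Fin n → Fin n}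
    {col : SimpleGraph (Fin n) → Fin n → ℕ} (h : IsBufferAlg b τ col) {t k T : ℕ}
    {G H : SimpleGraph (Fin n)} (hGH : AgreeBefore t G H) {Q : Finset (Fin n)}
    (hQ : IsGroup τ col G t k Q) (hT : t ≤ T) : IsGroup τ col H T k Q := by
  obtain ⟨h1, h2, h3⟩ := hQ
  refine ⟨h1, fun x hx => ?_, fun x hx y hy hxy => h3 hx hy ?_⟩
  · rw [← (h.eq_of_agree hGH (h2 x hx)).1]
    exact (h2 x hx).trans_le hT
  · rw [(h.eq_of_agree hGH (h2 x hx)).2, (h.eq_of_agree hGH (h2 y hy)).2, hxy]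

lemma IsGroup.lt {n b : ℕ} {τ : SimpleGraph (Fin n) → Fin n → Fin n}
    {col : SimpleGraph (Fin n) → Fin n → ℕ} (h : IsBufferAlg b τ col) {t k : ℕ}
    {G : SimpleGraph (Fin n)} {Q : Finset (Fin n)}
    (hQ : IsGroup τ col G t k Q) {x : Fin n} (hx : x ∈ Q) : x.val < t :=
  lt_of_le_of_lt (h.1 G x) (hQ.2.1 x hx)

/-- Groups with different colour sets contain a group of the next level in their union. -/
lemma IsGroup.exists_succ {n : ℕ} {τ : SimpleGraph (Fin n) → Fin n → Fin n}
    {col : SimpleGraph (Fin n) → Fin n → ℕ} {t k : ℕ}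
    {G : SimpleGraph (Fin n)} {A B : Finset (Fin n)} (hA : IsGroup τ col G t k A)
    (hB : IsGroup τ col G t k B) (hne : A.image (col G) ≠ B.image (col G)) :
    ∃ R ⊆ A ∪ B, IsGroup τ col G t (k + 1) R := by
  classical
  have hcA : (A.image (col G)).card = k := by rw [Finset.card_image_of_injOn hA.2.2, hA.1]
  have hcB : (B.image (col G)).card = k := by rw [Finset.card_image_of_injOn hB.2.2, hB.1]
  have hcard : k + 1 ≤ ((A ∪ B).image (col G)).card := by
    by_contra hlt
    have hUA : A.image (col G) = (A ∪ B).image (col G) :=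
      Finset.eq_of_subset_of_card_le (Finset.image_subset_image Finset.subset_union_left)
        (by omega)
    have hUB : B.image (col G) = (A ∪ B).image (col G) :=
      Finset.eq_of_subset_of_card_le (Finset.image_subset_image Finset.subset_union_right)
        (by omega)
    exact hne (hUA.trans hUB.symm)
  obtain ⟨U, hU, hinj, himg⟩ := Finset.exists_subset_injOn_image_eq_of_surjOn
    (f := col G) (s := ((A ∪ B : Finset (Fin n)) : Set (Fin n))) (t := (A ∪ B).image (col G)) (by
      intro x hx
      simpa using hx)
  have hcU : k + 1 ≤ U.card := by
    rw [← Finset.card_image_of_injOn hinj, himg]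
    exact hcard
  obtain ⟨R, hRU, hR⟩ := Finset.exists_subset_card_eq hcU
  refine ⟨R, fun x hx => hU (hRU hx), hR, fun x hx => ?_, hinj.mono hRU⟩
  rcases Finset.mem_union.1 (hU (hRU hx)) with hx | hx
  · exact hA.2.1 x hx
  · exact hB.2.1 x hx

/-- After `t` steps the adversary can own `N` pairwise disjoint groups of level `k`, all inside one
transversal. The vertices that have not arrived are isolated, hence belong to the transversal. -/
def HasGroups {n : ℕ} (τ : SimpleGraph (Fin n) → Fin n → Fin n)
    (col : SimpleGraph (Fin n) → Fin n → ℕ) (k N t : ℕ) : Prop :=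
  ∃ (G : SimpleGraph (Fin n)) (P : Set (Fin n)) (Q : ℕ → Finset (Fin n)),
    (∀ u v, G.Adj u v → u.val < t) ∧ IsTransversal G P ∧ (∀ u : Fin n, t ≤ u.val → u ∈ P) ∧
    (∀ i < N, (Q i : Set (Fin n)) ⊆ P) ∧
    (∀ i < N, ∀ j < N, i ≠ j → Disjoint (Q i) (Q j)) ∧
    ∀ i < N, IsGroup τ col G t k (Q i)

lemma HasGroups.mono {n : ℕ} {τ : SimpleGraph (Fin n) → Fin n → Fin n}
    {col : SimpleGraph (Fin n) → Fin n → ℕ} {k N M t : ℕ} (h : HasGroups τ col k N t)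
    (hM : M ≤ N) : HasGroups τ col k M t := by
  obtain ⟨G, P, Q, h1, h2, h3, h4, h5, h6⟩ := h
  exact ⟨G, P, Q, h1, h2, h3, fun i hi => h4 i (by omega),
    fun i hi j hj => h5 i (by omega) j (by omega), fun i hi => h6 i (by omega)⟩

/-- At level `0` all groups are empty, so there are as many of them as desired. -/
lemma hasGroups_zero {n : ℕ} (τ : SimpleGraph (Fin n) → Fin n → Fin n)
    (col : SimpleGraph (Fin n) → Fin n → ℕ) (N : ℕ) : HasGroups τ col 0 N 0 :=
  ⟨⊥, Set.univ, fun _ => ∅, by simp, isTransversal_bot, by simp, by simp, by simp,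
    fun i _ => ⟨by simp, by simp, by simp⟩⟩

/-- The first `i` steps of a batch. The pair `Q (2 * j)`, `Q (2 * j + 1)` is spent on the new vertex
`t + j` and produces `R j`, which is a group as soon as that vertex is coloured, whatever the
continuation `H` of the game. -/
lemma batch {n b : ℕ} {τ : SimpleGraph (Fin n) → Fin n → Fin n}
    {col : SimpleGraph (Fin n) → Fin n → ℕ} (h : IsBufferAlg b τ col) {k N t m : ℕ}
    (hmN : 2 * m ≤ N) (htm : t + m ≤ n)
    {G : SimpleGraph (Fin n)} {P : Set (Fin n)} {Q : ℕ → Finset (Fin n)}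
    (hG : ∀ u v, G.Adj u v → u.val < t) (hP : IsTransversal G P)
    (hfree : ∀ u : Fin n, t ≤ u.val → u ∈ P)
    (hQP : ∀ i < N, (Q i : Set (Fin n)) ⊆ P)
    (hdis : ∀ i < N, ∀ j < N, i ≠ j → Disjoint (Q i) (Q j))
    (hQ : ∀ i < N, IsGroup τ col G t k (Q i)) (i : ℕ) (hi : i ≤ m) :
    ∃ (G' : SimpleGraph (Fin n)) (P' : Set (Fin n)) (R : ℕ → Finset (Fin n)),
      AgreeBefore t G G' ∧ (∀ u v, G'.Adj u v → u.val < t + i) ∧ IsTransversal G' P' ∧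
      (∀ u : Fin n, t + i ≤ u.val → u ∈ P') ∧
      (∀ l < N, 2 * i ≤ l → (Q l : Set (Fin n)) ⊆ P') ∧
      (∀ j < i, (R j : Set (Fin n)) ⊆ P') ∧
      (∀ j < i, ∀ x ∈ R j, x ∈ Q (2 * j) ∨ x ∈ Q (2 * j + 1) ∨ x.val = t + j) ∧
      ∀ j < i, ∀ H T, AgreeBefore (t + i) G' H → t + i ≤ T →
        (∀ v : Fin n, v.val = t + j → (τ H v).val < T) → IsGroup τ col H T (k + 1) (R j) := by
  classical
  induction i with
  | zero =>
    exact ⟨G, P, fun _ => ∅, fun _ _ _ _ => Iff.rfl, hG, hP, hfree, fun l hl _ => hQP l hl,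
      by simp, by simp, by simp⟩
  | succ i ih =>
    obtain ⟨G', P', R, hag, hadj, htr, hfr, hQP', hRP, hRsub, hsem⟩ := ih (by omega)
    have hA := hQ (2 * i) (by omega)
    have hB := hQ (2 * i + 1) (by omega)
    have hAP := hQP' (2 * i) (by omega) (by omega)
    have hBP := hQP' (2 * i + 1) (by omega) (by omega)
    by_cases hcol : (Q (2 * i)).image (col G) = (Q (2 * i + 1)).image (col G)
    · -- Equal colour sets: the new vertex is joined to the second group.
      obtain ⟨v, hv⟩ : ∃ v : Fin n, v.val = t + i := ⟨⟨t + i, by omega⟩, rfl⟩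
      have hvB : v ∉ Q (2 * i + 1) := fun hx => by have := hB.lt h hx; omega
      have hvA : v ∉ Q (2 * i) := fun hx => by have := hA.lt h hx; omega
      obtain ⟨G₁, htr₁, hadj₁⟩ := htr.star (hfr v hv.ge) (Q (2 * i + 1)) hBP hvB
      have hag₁ : AgreeBefore (t + i) G' G₁ := by
        intro u w hu hw
        rw [hadj₁]
        have hu' : u ≠ v := by rintro rfl; omega
        have hw' : w ≠ v := by rintro rfl; omega
        simp [hu', hw']
      have hold : ∀ l < N, l ≠ 2 * i + 1 → (Q l : Set (Fin n)) ⊆ P' →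
          (Q l : Set (Fin n)) ⊆ P' \ (Q (2 * i + 1)) := fun l hl hne hsub x hx =>
        ⟨hsub hx, fun hx' => Finset.disjoint_left.1 (hdis l hl _ (by omega) hne) hx hx'⟩
      refine ⟨G₁, P' \ (Q (2 * i + 1)), fun j => if j = i then insert v (Q (2 * i)) else R j,
        hag.trans (hag₁.mono (by omega)), ?_, htr₁, ?_, ?_, ?_, ?_, ?_⟩
      · intro u w huw
        rcases (hadj₁ u w).1 huw with huw | ⟨rfl, -⟩ | ⟨-, hu⟩
        · have := hadj u w huw; omega
        · omega
        · have := hB.lt h hu; omega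
      · intro u hu
        exact ⟨hfr u (by omega), fun hx => by have := hB.lt h hx; omega⟩
      · exact fun l hl hle => hold l hl (by omega) (hQP' l hl (by omega))
      · intro j hj
        by_cases hji : j = i
        · simp only [hji, if_true, Finset.coe_insert]
          refine Set.insert_subset ⟨hfr v hv.ge, hvB⟩ (hold _ (by omega) (by omega) hAP)
        · simp only [hji, if_false]
          intro x hx
          refine ⟨hRP j (by omega) hx, fun hxB => ?_⟩
          rcases hRsub j (by omega) x hx with hx | hx | hx
          · exact Finset.disjoint_left.1 (hdis (2 * j) (by omega) (2 * i + 1) (by omega) (by omega))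
              hx hxB
          · exact Finset.disjoint_left.1 (hdis (2 * j + 1) (by omega) (2 * i + 1) (by omega)
              (by omega)) hx hxB
          · have := hB.lt h hxB; omega
      · intro j hj x hx
        by_cases hji : j = i
        · subst hji
          simp only [if_true, Finset.mem_insert] at hx
          rcases hx with rfl | hx
          · exact Or.inr (Or.inr hv)
          · exact Or.inl hx
        · simp only [hji, if_false] at hx
          exact hRsub j (by omega) x hx
      · intro j hj H T hH hT hτ
        by_cases hji : j = i
        · subst hji
          simp only [if_true]
          have hGH : AgreeBefore t G H :=
            hag.trans ((hag₁.mono (by omega)).trans (hH.mono (by omega)))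
          have hAH := hA.of_agree h hGH (T := T) (by omega)
          have hnew : ∀ a ∈ Q (2 * j), col H a ≠ col H v := by
            intro a ha hav
            have : col G a ∈ (Q (2 * j + 1)).image (col G) := by
              rw [← hcol]
              exact Finset.mem_image_of_mem _ ha
            obtain ⟨w, hw, hwa⟩ := Finset.mem_image.1 this
            have h1 := (h.eq_of_agree hGH (hA.2.1 a ha)).2
            have h2 := (h.eq_of_agree hGH (hB.2.1 w hw)).2
            have hwv : H.Adj v w := by
              rw [← hH v w (by omega) (by have := hB.lt h hw; omega), hadj₁]
              exact Or.inr (Or.inl ⟨rfl, hw⟩)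
            refine h.2.2.2 H v w hwv ?_
            rw [← hav, ← h1, ← h2, hwa]
          refine ⟨by rw [Finset.card_insert_of_notMem hvA, hA.1], ?_, ?_⟩
          · intro x hx
            rcases Finset.mem_insert.1 hx with rfl | hx
            · exact hτ _ hv
            · exact hAH.2.1 x hx
          · rw [Finset.coe_insert, Set.injOn_insert (by simpa using hvA)]
            refine ⟨hAH.2.2, ?_⟩
            rintro ⟨a, ha, hav⟩
            exact hnew a ha hav
        · simp only [hji, if_false]
          exact hsem j (by omega) H T (hag₁.trans (hH.mono (by omega))) (by omega) hτ
    · -- Different colour sets: the new vertex stays isolated and plays no role.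
      obtain ⟨R₀, hR₀, hgr⟩ := hA.exists_succ hB hcol
      refine ⟨G', P', fun j => if j = i then R₀ else R j, hag, ?_, htr, ?_, ?_, ?_, ?_, ?_⟩
      · intro u w huw
        have := hadj u w huw; omega
      · exact fun u hu => hfr u (by omega)
      · exact fun l hl hle => hQP' l hl (by omega)
      · intro j hj
        by_cases hji : j = i
        · simp only [hji, if_true]
          intro x hx
          rcases Finset.mem_union.1 (hR₀ hx) with hx | hx
          · exact hAP hx
          · exact hBP hx
        · simp only [hji, if_false]
          exact hRP j (by omega)
      · intro j hj x hx
        by_cases hji : j = i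
        · subst hji
          simp only [if_true] at hx
          rcases Finset.mem_union.1 (hR₀ hx) with hx | hx
          · exact Or.inl hx
          · exact Or.inr (Or.inl hx)
        · simp only [hji, if_false] at hx
          exact hRsub j (by omega) x hx
      · intro j hj H T hH hT hτ
        by_cases hji : j = i
        · simp only [hji, if_true]
          exact hgr.of_agree h (hag.trans (hH.mono (by omega))) (by omega)
        · simp only [hji, if_false]
          exact hsem j (by omega) H T (hH.mono (by omega)) (by omega) hτ

/-- A full batch: of the `m` candidates, only those whose new vertex sits in the buffer are lost. -/
lemma HasGroups.succ {n b : ℕ} {τ : SimpleGraph (Fin n) → Fin n → Fin n}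
    {col : SimpleGraph (Fin n) → Fin n → ℕ} (h : IsBufferAlg b τ col) {k N t m : ℕ}
    (hmN : 2 * m ≤ N) (htm : t + m ≤ n) (hm : 0 < m) (hg : HasGroups τ col k N t) :
    HasGroups τ col (k + 1) (m - b) (t + m) := by
  classical
  obtain ⟨G, P, Q, hG, hP, hfree, hQP, hdis, hQ⟩ := hg
  obtain ⟨G', P', R, -, hadj, htr, hfr, -, hRP, hRsub, hsem⟩ :=
    batch h hmN htm hG hP hfree hQP hdis hQ m le_rfl
  have hRdis : ∀ i < m, ∀ j < m, i ≠ j → Disjoint (R i) (R j) := by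
    intro i hi j hj hij
    rw [Finset.disjoint_left]
    intro x hxi hxj
    have key : ∀ a < N, ∀ c < N, a ≠ c → x ∈ Q a → x ∈ Q c → False := fun a ha c hc hac h1 h2 =>
      Finset.disjoint_left.1 (hdis a ha c hc hac) h1 h2
    have hlt : ∀ a < N, x ∈ Q a → x.val < t := fun a ha hx => (hQ a ha).lt h hx
    rcases hRsub i hi x hxi with h1 | h1 | h1 <;> rcases hRsub j hj x hxj with h2 | h2 | h2
    · exact key _ (by omega) _ (by omega) (by omega) h1 h2
    · exact key _ (by omega) _ (by omega) (by omega) h1 h2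
    · have := hlt _ (by omega) h1; omega
    · exact key _ (by omega) _ (by omega) (by omega) h1 h2
    · exact key _ (by omega) _ (by omega) (by omega) h1 h2
    · have := hlt _ (by omega) h1; omega
    · have := hlt _ (by omega) h2; omega
    · have := hlt _ (by omega) h2; omega
    · omega
  -- Index `j` is good if the new vertex `t + j` is coloured by the end of the batch.
  let new : Fin m → Fin n := fun j => ⟨t + j, by omega⟩
  have hnew : Function.Injective new := by
    intro i j hij
    have : t + i.val = t + j.val := congrArg Fin.val hij
    exact Fin.ext (by omega)
  let J : Finset (Fin m) := Finset.univ.filter fun j => (τ G' (new j)).val < t + m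
  have hbad : (Finset.univ \ J).card ≤ b := by
    refine le_trans ?_ (h.2.1 G' ⟨t + m - 1, by omega⟩)
    rw [← Finset.card_image_of_injective _ hnew, ← Set.ncard_coe_finset]
    refine Set.ncard_le_ncard ?_ (Set.toFinite _)
    intro x hx
    simp only [Finset.coe_image, Set.mem_image, Finset.mem_coe, Finset.mem_sdiff,
      Finset.mem_univ, true_and, J, Finset.mem_filter, not_lt] at hx
    obtain ⟨j, hj, rfl⟩ := hx
    constructor
    · change t + j.val ≤ t + m - 1
      omega
    · change t + m - 1 < (τ G' (new j)).val
      omega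
  have hJ : m - b ≤ J.card := by
    rw [Finset.card_sdiff_of_subset (Finset.subset_univ _), Finset.card_univ,
      Fintype.card_fin] at hbad
    omega
  let e := J.orderEmbOfFin rfl
  let g : ℕ → ℕ := fun i => if hi : i < J.card then (e ⟨i, hi⟩).val else 0
  have hg_eq : ∀ i (hi : i < J.card), g i = (e ⟨i, hi⟩).val := fun i hi => by simp [g, hi]
  have hgm : ∀ i < J.card, g i < m := fun i hi => by rw [hg_eq i hi]; exact (e ⟨i, hi⟩).isLt
  refine ⟨G', P', fun i => R (g i), hadj, htr, hfr, ?_, ?_, ?_⟩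
  · exact fun i hi => hRP _ (hgm i (by omega))
  · intro i hi j hj hij
    refine hRdis _ (hgm i (by omega)) _ (hgm j (by omega)) fun heq => hij ?_
    rw [hg_eq i (by omega), hg_eq j (by omega)] at heq
    have := e.injective (Fin.ext heq)
    exact congrArg Fin.val this
  · intro i hi
    refine hsem _ (hgm i (by omega)) G' _ (fun _ _ _ _ => Iff.rfl) le_rfl ?_
    intro v hv
    have hmem : e ⟨i, by omega⟩ ∈ J := Finset.orderEmbOfFin_mem J rfl _
    have hve : v = new (e ⟨i, by omega⟩) := by
      apply Fin.ext
      rw [hv, hg_eq i (by omega)]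
    rw [hve]
    exact (Finset.mem_filter.1 hmem).2

/-- The group counts solve `N (j + 1) = 2 * (N j + (b + 1))` with `N 0 = b + 1`. -/
lemma HasGroups.iterate {n b : ℕ} {τ : SimpleGraph (Fin n) → Fin n → Fin n}
    {col : SimpleGraph (Fin n) → Fin n → ℕ} (h : IsBufferAlg b τ col) (j : ℕ) :
    ∀ k t, HasGroups τ col k ((b + 1) * (3 * 2 ^ j - 2)) t → t + 3 * (b + 1) * 2 ^ j ≤ n →
      ∃ t < n, HasGroups τ col (k + j) 1 t := by
  induction j with
  | zero =>
    intro k t hg ht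
    exact ⟨t, by omega, hg.mono (by omega)⟩
  | succ j ih =>
    intro k t hg ht
    obtain ⟨y, hy⟩ : ∃ y, 2 ^ j = y + 1 := ⟨2 ^ j - 1, by have := Nat.one_le_two_pow (n := j); omega⟩
    have e1 : 3 * 2 ^ (j + 1) - 2 = 2 * (3 * y + 2) := by rw [pow_succ]; omega
    have e2 : 3 * 2 ^ j - 2 = 3 * y + 1 := by omega
    rw [e1] at hg
    rw [pow_succ, hy] at ht
    have hs := hg.succ h (m := (b + 1) * (3 * y + 2)) (by ring_nf; rfl)
      (by nlinarith) (by positivity)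
    have := ih (k + 1) (t + (b + 1) * (3 * y + 2)) (hs.mono ?_) ?_
    · rwa [show k + 1 + j = k + (j + 1) by ring] at this
    · rw [e2]
      apply Nat.le_sub_of_add_le
      nlinarith
    · rw [hy]
      nlinarith

/-- The combinatorial core: `K` colours are forced on a tree once `3 (b + 1) 2 ^ K ≤ n`. -/
lemma IsBufferAlg.exists_tree {n b : ℕ} {τ : SimpleGraph (Fin n) → Fin n → Fin n}
    {col : SimpleGraph (Fin n) → Fin n → ℕ} (h : IsBufferAlg b τ col) (K : ℕ)
    (hK : 3 * (b + 1) * 2 ^ K ≤ n) :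
    ∃ G : SimpleGraph (Fin n), G.Connected ∧ G.IsAcyclic ∧ K ≤ colorsUsedBuf col G := by
  classical
  obtain ⟨t, htn, G, P, Q, hG, hP, hfree, -, -, hQ⟩ :=
    HasGroups.iterate h K 0 0 (hasGroups_zero τ col _) (by omega)
  rw [zero_add] at hQ
  have hQ0 := hQ 0 one_pos
  -- The last vertex becomes the centre of a star on the transversal.
  obtain ⟨v, hv⟩ : ∃ v : Fin n, v.val = n - 1 := ⟨⟨n - 1, by omega⟩, rfl⟩
  have hvP : v ∈ P := hfree v (by omega)
  let S : Finset (Fin n) := Finset.univ.filter fun x => x ∈ P ∧ x ≠ v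
  obtain ⟨G', ⟨hac, r, -, hr2, -, hr4⟩, hadj⟩ := hP.star hvP S
    (fun x hx => by simp [S] at hx; exact hx.1) (by simp [S])
  have hrv : ∀ u, r u = v := by
    intro u
    have := hr4 u
    simp only [S, Set.mem_sdiff, Finset.mem_coe, Finset.mem_filter, Finset.mem_univ, true_and,
      not_and, not_not] at this
    exact this.2 this.1
  have hreach : ∀ u, G'.Reachable u v := fun u => by
    have := hr2 u
    rwa [hrv u] at this
  have hag : AgreeBefore t G G' := by
    intro u w hu hw
    rw [hadj]
    have hu' : u ≠ v := by rintro rfl; omega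
    have hw' : w ≠ v := by rintro rfl; omega
    simp [hu', hw']
  have hgr := hQ0.of_agree h hag le_rfl
  refine ⟨G', ?_, hac, ?_⟩
  · have : Nonempty (Fin n) := ⟨v⟩
    exact ⟨fun u w => (hreach u).trans (hreach w).symm⟩
  · rw [← hgr.1, ← Finset.card_image_of_injOn hgr.2.2]
    exact Finset.card_le_card (Finset.image_subset_image (Finset.subset_univ _))

theorem buffer_lower_bound_trees :
    ∃ α : ℝ, 0 < α ∧
      ∀ (ε : ℝ), 0 < ε → ε ≤ 1 →
        ∀ (n : ℕ), (2 : ℝ) ^ ((7 : ℝ) / ε) ≤ (n : ℝ) →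
          ∀ (b : ℕ), (b : ℝ) ≤ (n : ℝ) ^ ((1 : ℝ) - ε) →
            ∀ (τ : SimpleGraph (Fin n) → Fin n → Fin n)
              (col : SimpleGraph (Fin n) → Fin n → ℕ),
              IsBufferAlg b τ col →
              ∃ G : SimpleGraph (Fin n), G.Connected ∧ G.IsAcyclic ∧
                α * ε * Real.logb 2 n ≤ (colorsUsedBuf col G : ℝ) := by
  -- `⌊x⌋ - 3 ≥ x - 4 ≥ 3 x / 7` for `x = ε log n ≥ 7`.
  refine ⟨3 / 7, by norm_num, ?_⟩
  intro ε hε0 hε1 n hn b hb τ col h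
  have hn1 : (1 : ℝ) ≤ n :=
    (Real.one_le_rpow (by norm_num) (by positivity)).trans hn
  have hn0 : (0 : ℝ) < n := by linarith
  set x := ε * Real.logb 2 n with hx
  have hx7 : 7 ≤ x := by
    have : 7 / ε ≤ Real.logb 2 n := (Real.le_logb_iff_rpow_le (by norm_num) hn0).2 hn
    rw [div_le_iff₀ hε0] at this
    linarith
  have hfl : 3 ≤ ⌊x⌋₊ := Nat.le_floor (by norm_num; linarith)
  obtain ⟨K, hK⟩ : ∃ K, ⌊x⌋₊ = K + 3 := ⟨⌊x⌋₊ - 3, by omega⟩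
  have hKx : (K : ℝ) + 3 ≤ x := by
    have := Nat.floor_le (show 0 ≤ x by linarith)
    rw [hK] at this
    push_cast at this
    exact this
  have hxK : x < K + 4 := by
    have := Nat.lt_floor_add_one x
    rw [hK] at this
    push_cast at this
    linarith
  have hpow : (2 : ℝ) ^ x = (n : ℝ) ^ ε := by
    rw [hx, mul_comm, Real.rpow_mul (by norm_num),
      Real.rpow_logb (by norm_num) (by norm_num) hn0]
  have h8 : (8 : ℝ) * 2 ^ K ≤ (n : ℝ) ^ ε := by
    rw [← hpow]
    calc (8 : ℝ) * 2 ^ K = (2 : ℝ) ^ ((K : ℝ) + 3) := by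
          rw [Real.rpow_add (by norm_num), Real.rpow_natCast]
          norm_num
          ring
      _ ≤ _ := Real.rpow_le_rpow_of_exponent_le (by norm_num) hKx
  have hb1 : (b : ℝ) + 1 ≤ 2 * (n : ℝ) ^ (1 - ε) := by
    have := Real.one_le_rpow hn1 (show 0 ≤ 1 - ε by linarith)
    linarith
  have hprod : (n : ℝ) ^ (1 - ε) * (n : ℝ) ^ ε = n := by
    rw [← Real.rpow_add hn0]
    simp
  have hmain : 3 * (b + 1) * 2 ^ K ≤ n := by
    have : (3 : ℝ) * (b + 1) * 2 ^ K ≤ n := by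
      have h2 : (0 : ℝ) < 2 ^ K := by positivity
      have hp : (0 : ℝ) < (n : ℝ) ^ (1 - ε) := by positivity
      calc (3 : ℝ) * (b + 1) * 2 ^ K ≤ 3 * (2 * (n : ℝ) ^ (1 - ε)) * 2 ^ K := by gcongr
        _ = (n : ℝ) ^ (1 - ε) * (6 * 2 ^ K) := by ring
        _ ≤ (n : ℝ) ^ (1 - ε) * (n : ℝ) ^ ε := by gcongr; linarith
        _ = n := hprod
    exact_mod_cast this
  obtain ⟨G, hc, ha, hKG⟩ := h.exists_tree K hmain
  refine ⟨G, hc, ha, ?_⟩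
  have : (K : ℝ) ≤ colorsUsedBuf col G := by exact_mod_cast hKG
  rw [mul_assoc, ← hx]
  linarith
end

section
/- Let G be a simple graph and let C be a cycle in G of even length at least 6. Suppose u and v are two vertices of C that are not consecutive on C, that u and v are adjacent in G, and that the neighborhoods satisfy N(u) \ {v} = N(v) \ {u}. Then C has an odd chord, i.e., there is an edge of G joining two vertices of C that are not consecutive on C and whose distance along the cycle C is odd. -/
/-!
Write `n` for the length of the cycle and let the twins sit at positions `i < j` on it. If
`j - i` is odd, the edge between the twins is itself the required chord. Otherwise both arcs between
the twins have even length, and since `n ≥ 6` one of them has length at least `4`. Step from a twin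
to its cycle neighbour `w` inside that long arc: the twin condition makes `w` adjacent to the other
twin, and `w` splits the cycle into two arcs of odd length at least `3` as seen from that other
twin. The only fact about cycles needed is that positions at distance at least `2` along both
arcs are not joined by an edge of the cycle (`not_mem_edges_of_far`).
-/

/-- A closed walk (cycle) has an odd chord: an edge of the graph joining two
vertices of the cycle that are not consecutive on it and whose distance along
the cycle (the length of the shorter of the two arcs) is odd. -/
def SimpleGraph.Walk.HasOddChord {V : Type*} {G : SimpleGraph V} {v : V}
    (p : G.Walk v v) : Prop :=
  ∃ i j : ℕ, i < j ∧ j < p.length ∧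
    G.Adj (p.getVert i) (p.getVert j) ∧ s(p.getVert i, p.getVert j) ∉ p.edges ∧
    Odd (min (j - i) (p.length - (j - i)))

/-- Two vertices of a cycle separated by at least two steps along both arcs are not
consecutive. -/
lemma not_mem_edges_of_far {V : Type*} {G : SimpleGraph V} {x : V} {p : G.Walk x x}
    (hcyc : p.IsCycle) {a b : ℕ} (hab : a + 2 ≤ b) (hb : b < p.length)
    (hba : b - a + 2 ≤ p.length) : s(p.getVert a, p.getVert b) ∉ p.edges := by
  have inj : ∀ {c d : ℕ}, c < p.length → d < p.length → p.getVert c = p.getVert d → c = d :=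
    fun hc hd h => hcyc.getVert_injOn' (by simp only [Set.mem_ofPred_eq]; omega)
      (by simp only [Set.mem_ofPred_eq]; omega) h
  intro h
  obtain ⟨k, hk, he⟩ := List.mem_iff_getElem.1 h
  rw [SimpleGraph.Walk.length_edges] at hk
  have he' : s(p.getVert k, p.getVert (k + 1)) = s(p.getVert a, p.getVert b) := by
    rw [← he]; simp [SimpleGraph.Walk.getElem_edges]
  -- The last edge of the closed walk returns to position `0`.
  obtain ⟨l, hl, hkl, hl'⟩ : ∃ l, l < p.length ∧ p.getVert (k + 1) = p.getVert l ∧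
      (l = k + 1 ∨ (l = 0 ∧ k + 1 = p.length)) := by
    by_cases hk1 : k + 1 < p.length
    · exact ⟨k + 1, hk1, rfl, .inl rfl⟩
    · have hk2 : k + 1 = p.length := by omega
      exact ⟨0, by omega, by simp [hk2], .inr ⟨rfl, hk2⟩⟩
  rw [hkl, Sym2.eq_iff] at he'
  rcases he' with ⟨h1, h2⟩ | ⟨h1, h2⟩
  · have := inj hk (by omega) h1
    have := inj hl hb h2
    omega
  · have := inj hk hb h1
    have := inj hl (by omega) h2
    omega

/-- An edge of the graph between positions of a cycle of even length whose difference is odd, and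
which are at least two steps apart along both arcs, is an odd chord. -/
lemma hasOddChord_of_adj {V : Type*} {G : SimpleGraph V} {x : V} {p : G.Walk x x}
    (hcyc : p.IsCycle) (heven : Even p.length) {a b : ℕ} (hab : a + 2 ≤ b) (hb : b < p.length)
    (hba : b - a + 2 ≤ p.length) (hodd : Odd (b - a))
    (hadj : G.Adj (p.getVert a) (p.getVert b)) : p.HasOddChord := by
  refine ⟨a, b, by omega, hb, hadj, not_mem_edges_of_far hcyc hab hb hba, ?_⟩
  grind

/-- The theorem for twins given by their positions `i < j` on the cycle. -/
lemma hasOddChord_of_twin_getVert {V : Type*} {G : SimpleGraph V} {x : V} {p : G.Walk x x}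
    (hcyc : p.IsCycle) (heven : Even p.length) (hlen : 6 ≤ p.length) {i j : ℕ}
    (hij : i < j) (hj : j < p.length)
    (hcons : s(p.getVert i, p.getVert j) ∉ p.edges) (hadj : G.Adj (p.getVert i) (p.getVert j))
    (hN : ∀ w, w ≠ p.getVert i → w ≠ p.getVert j →
      (G.Adj (p.getVert i) w ↔ G.Adj (p.getVert j) w)) :
    p.HasOddChord := by
  have ne : ∀ {c d : ℕ}, c < p.length → d < p.length → c ≠ d → p.getVert c ≠ p.getVert d :=
    fun hc hd hcd h => hcd (hcyc.getVert_injOn' (by simp only [Set.mem_ofPred_eq]; omega)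
      (by simp only [Set.mem_ofPred_eq]; omega) h)
  rcases Nat.even_or_odd (j - i) with he | ho
  · obtain ⟨m, hm⟩ := he
    obtain ⟨t, ht⟩ := heven
    by_cases h4 : 4 ≤ j - i
    · -- The arc from `i` to `j` is long, so `w` is the vertex at position `i + 1`.
      have h1 : G.Adj (p.getVert i) (p.getVert (i + 1)) := p.adj_getVert_succ (by omega)
      rw [hN _ (ne (by omega) (by omega) (by omega)) (ne (by omega) (by omega) (by omega))] at h1
      exact hasOddChord_of_adj hcyc ⟨t, ht⟩ (a := i + 1) (b := j) (by omega) hj (by omega)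
        ⟨m - 1, by omega⟩ h1.symm
    · -- Here `j = i + 2` and `w` is the vertex after position `j`, cyclically.
      have h1 : G.Adj (p.getVert j) (p.getVert (j + 1)) := p.adj_getVert_succ hj
      by_cases hj1 : j + 1 < p.length
      · rw [← hN _ (ne (by omega) (by omega) (by omega)) (ne (by omega) (by omega) (by omega))] at h1
        exact hasOddChord_of_adj hcyc ⟨t, ht⟩ (a := i) (b := j + 1) (by omega) hj1 (by omega)
          ⟨m, by omega⟩ h1
      · have h0 : p.getVert (j + 1) = p.getVert 0 := by
          rw [show j + 1 = p.length by omega]; simp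
        rw [h0, ← hN _ (ne (by omega) (by omega) (by omega))
          (ne (by omega) (by omega) (by omega))] at h1
        exact hasOddChord_of_adj hcyc ⟨t, ht⟩ (a := 0) (b := i) (by omega) (by omega) (by omega)
          ⟨t - 2, by omega⟩ h1.symm
  · exact ⟨i, j, hij, hj, hadj, hcons, by grind⟩

theorem odd_chord_of_twin_chord {V : Type*} (G : SimpleGraph V) {x : V}
    (p : G.Walk x x) (hcyc : p.IsCycle) (heven : Even p.length)
    (hlen : 6 ≤ p.length) (u v : V)
    (hu : u ∈ p.support) (hv : v ∈ p.support)
    (hcons : s(u, v) ∉ p.edges) (hadj : G.Adj u v)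
    (hN : G.neighborSet u \ {v} = G.neighborSet v \ {u}) :
    p.HasOddChord := by
  -- Positions can be taken below `p.length`, since position `p.length` is position `0` again.
  have pos : ∀ w ∈ p.support, ∃ i, i < p.length ∧ p.getVert i = w := by
    intro w hw
    obtain ⟨i, rfl, hi⟩ := SimpleGraph.Walk.mem_support_iff_exists_getVert.1 hw
    rcases hi.lt_or_eq with hi | rfl
    · exact ⟨i, hi, rfl⟩
    · exact ⟨0, by omega, by simp⟩
  have twin : ∀ w, w ≠ u → w ≠ v → (G.Adj u w ↔ G.Adj v w) := by
    intro w hwu hwv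
    have := Set.ext_iff.1 hN w
    simpa [hwu, hwv] using this
  obtain ⟨i, hi, rfl⟩ := pos u hu
  obtain ⟨j, hj, rfl⟩ := pos v hv
  rcases lt_trichotomy i j with h | rfl | h
  · exact hasOddChord_of_twin_getVert hcyc heven hlen h hj hcons hadj twin
  · exact absurd rfl hadj.ne
  · exact hasOddChord_of_twin_getVert hcyc heven hlen h hi (by rwa [Sym2.eq_swap]) hadj.symm
      fun w h1 h2 => (twin w h2 h1).symm
end
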